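/- Assume Σ_{j∈ℤ} r(j)² < ∞ and that r is asymptotically of constant sign and monotone: there is K ∈ ℕ such that either r(k) ≥ 0 and r(k+1) ≤ r(k) for all k ≥ K, or r(k) ≤ 0 and r(k+1) ≥ r(k) for all k ≥ K. Then d_TV( U_{f_q,n}(Z), N(0, u_{f_q}(Z)) ) → 0 as n → ∞. -/

import Mathlib

open MeasureTheory ProbabilityTheory Filter
open scoped NNReal ENNReal

noncomputable section

variable {Ω : Type*} [MeasureSpace Ω]

/-- `Z` is a centered stationary Gaussian sequence with covariance `r`. -/
def IsCSG (Z : ℤ → Ω → ℝ) (r : ℤ → ℝ) : Prop :=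
  (∀ k, Measurable (Z k)) ∧
  (∀ (s : Finset ℤ) (a : ℤ → ℝ), ∃ v : ℝ≥0,
    Measure.map (fun ω => ∑ k ∈ s, a k * Z k ω) (ℙ : Measure Ω) = gaussianReal 0 v) ∧
  (∀ j k : ℤ, ∫ ω, Z j ω * Z k ω = r (k - j)) ∧
  0 < r 0

/-- `m`-th probabilists' Hermite polynomial, as a function on `ℝ`. -/
def hermiteFun (m : ℕ) (x : ℝ) : ℝ := Polynomial.aeval x (Polynomial.hermite m)

/-- The polynomial `f_q(x) = ∑_{k=0}^{q/2} d_{2k} He_{2k}(x/√r0)`. -/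
def fpoly (r0 : ℝ) (d : ℕ → ℝ) (q : ℕ) (x : ℝ) : ℝ :=
  ∑ k ∈ Finset.range (q / 2 + 1), d (2 * k) * hermiteFun (2 * k) (x / Real.sqrt r0)

/-- Polynomial variation `Q_{f,n}(X)`. -/
def Qvar (f : ℝ → ℝ) (X : ℤ → Ω → ℝ) (n : ℕ) (ω : Ω) : ℝ :=
  (1 / (n : ℝ)) * ∑ i ∈ Finset.range n, f (X (i : ℤ) ω)

/-- `λ_f(X) = E[f(X_0)]`. -/
def lamE (f : ℝ → ℝ) (X : ℤ → Ω → ℝ) : ℝ := ∫ ω, f (X 0 ω)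

/-- `U_{f,n}(X) = √n (Q_{f,n}(X) − λ_f(X))`. -/
def Ustat (f : ℝ → ℝ) (X : ℤ → Ω → ℝ) (n : ℕ) (ω : Ω) : ℝ :=
  Real.sqrt n * (Qvar f X n ω - lamE f X)

/-- Variance of `U_{f,n}(X)`. -/
def varU (f : ℝ → ℝ) (X : ℤ → Ω → ℝ) (n : ℕ) : ℝ := ∫ ω, (Ustat f X n ω) ^ 2

/-- Standardized statistic `F_{f,n}(X)`. -/
def Fstat (f : ℝ → ℝ) (X : ℤ → Ω → ℝ) (n : ℕ) (ω : Ω) : ℝ :=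
  Ustat f X n ω / Real.sqrt (varU f X n)

/-- fourth cumulant `κ₄(X) = E[X⁴] − 3 (E[X²])²` of a centered random variable. -/
def kappa4 (X : Ω → ℝ) : ℝ := (∫ ω, X ω ^ 4) - 3 * (∫ ω, X ω ^ 2) ^ 2

/-- third cumulant `κ₃(X) = E[X³]`. -/
def kappa3 (X : Ω → ℝ) : ℝ := ∫ ω, X ω ^ 3

/-- `u_{f_q}(Z) = ∑_{k=1}^{q/2} d_{2k}² (2k)! ∑_{j∈ℤ} (r(j)/r(0))^{2k}`. -/
def ufq (r : ℤ → ℝ) (d : ℕ → ℝ) (q : ℕ) : ℝ :=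
  ∑ k ∈ Finset.Icc 1 (q / 2),
    (d (2 * k)) ^ 2 * (Nat.factorial (2 * k)) * ∑' j : ℤ, (r j / r 0) ^ (2 * k)

/-- Total variation distance between two laws on `ℝ`. -/
def dTV (μ ν : Measure ℝ) : ℝ :=
  ⨆ A : {A : Set ℝ // MeasurableSet A}, |(μ A.1).toReal - (ν A.1).toReal|

/-- Wasserstein distance between two laws on `ℝ`. -/
def dW (μ ν : Measure ℝ) : ℝ :=
  ⨆ f : {f : ℝ → ℝ // LipschitzWith 1 f}, |(∫ x, f.1 x ∂μ) - ∫ x, f.1 x ∂ν|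

/-- The quadratic function `f₂(x) = x²`. -/
def f2 : ℝ → ℝ := fun x => x ^ 2

/-- `U_{f₂,n}(X) = √n (Q_{f₂,n}(X) − r(0))`, quadratic case. -/
def U2 (X : ℤ → Ω → ℝ) (r0 : ℝ) (n : ℕ) (ω : Ω) : ℝ :=
  Real.sqrt n * (Qvar f2 X n ω - r0)

/-- Variance of `U_{f₂,n}`. -/
def varU2 (X : ℤ → Ω → ℝ) (r0 : ℝ) (n : ℕ) : ℝ := ∫ ω, (U2 X r0 n ω) ^ 2

/-- Standardized quadratic statistic `F_{f₂,n}`. -/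
def F2stat (X : ℤ → Ω → ℝ) (r0 : ℝ) (n : ℕ) (ω : Ω) : ℝ :=
  U2 X r0 n ω / Real.sqrt (varU2 X r0 n)

/-- `p`-th order finite difference of a sequence of processes. -/
def fdiff : ℕ → (ℤ → Ω → ℝ) → (ℤ → Ω → ℝ)
  | 0, Z => Z
  | (p + 1), Z => fun k ω => fdiff p Z (k + 1) ω - fdiff p Z k ω

/-!
With `He_m` denoting the Hermite polynomials and `δ A = X A - A'` the Gaussian divergence,
`δ He_{m-1} = He_m`, so `f_q - λ = δ H` for an odd polynomial `H`. Gaussian integration by parts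
then shows that `U_n = n^{-1/2} ∑ i, δ H (X_i)`, where `X = Z / √(r 0)` has correlation
`ρ = r / r 0`, has the Stein kernel `T_n = n⁻¹ ∑ i, ∑ j, ρ (j - i) H (X_i) (δ H)' (X_j)`. Stein's
method bounds the total variation distance between `U_n` and `N(0, u)` by `(2 / u) E|T_n - u|`.
The mean of `T_n` is a Cesàro average of the autocovariances of `δ H (X)` and tends to their sum
`u`. Since `H` and `(δ H)'` are both odd, the products `H (X_i) (δ H)' (X_j)` have even degree,
and by Wick's formula two such products have covariance of the order of the *squared* correlations
between them. Summing up, `Var T_n` is at most a multiple of `‖ρ‖² n⁻¹ (∑_{|m| < n} |ρ m|)²`,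
which tends to `0` as soon as `ρ` is square summable.
-/

/-! ### Total variation distance -/

theorem measureReal_le_of_forall_continuous {μ ν : Measure ℝ} [IsProbabilityMeasure μ]
    [IsProbabilityMeasure ν] {ε : ℝ}
    (h : ∀ f : ℝ → ℝ, Continuous f → (∀ x, f x ∈ Set.Icc 0 1) →
      |∫ x, f x ∂μ - ∫ x, f x ∂ν| ≤ ε) {A : Set ℝ} (hA : MeasurableSet A) :
    μ.real A ≤ ν.real A + ε := by
  have of_isClosed : ∀ F : Set ℝ, IsClosed F → μ.real F ≤ ν.real F + ε := by
    intro F hF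
    have hpos : ∀ n : ℕ, (0 : ℝ) < 1 / ((n : ℝ) + 1) := fun n => by positivity
    have tendsto_μ := tendsto_integral_thickenedIndicator_of_isClosed μ hF hpos
      tendsto_one_div_add_atTop_nhds_zero_nat
    have tendsto_ν := tendsto_integral_thickenedIndicator_of_isClosed ν hF hpos
      tendsto_one_div_add_atTop_nhds_zero_nat
    refine le_of_tendsto_of_tendsto' tendsto_μ (tendsto_ν.add_const ε) fun n => ?_
    have := h (fun x => (thickenedIndicator (hpos n) F x : ℝ))
      (NNReal.continuous_coe.comp (thickenedIndicator (hpos n) F).continuous)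
      fun x => ⟨NNReal.coe_nonneg _, by exact_mod_cast thickenedIndicator_le_one (hpos n) F x⟩
    linarith [(abs_le.1 this).2]
  refine le_of_forall_pos_le_add fun δ hδ => ?_
  obtain ⟨F, hFA, hF, hlt⟩ := hA.exists_isClosed_lt_add (measure_ne_top μ A)
    (ε := ENNReal.ofReal δ) (by simpa using hδ)
  have hμF : μ.real A ≤ μ.real F + δ := by
    have := ENNReal.toReal_mono (by simp) hlt.le
    rwa [ENNReal.toReal_add (by simp) (by simp), ENNReal.toReal_ofReal hδ.le] at this
  have hνF : ν.real F ≤ ν.real A := measureReal_mono hFA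
  linarith [of_isClosed F hF]

theorem dTV_nonneg (μ ν : Measure ℝ) : 0 ≤ dTV μ ν :=
  Real.iSup_nonneg fun _ => abs_nonneg _

theorem dTV_self (μ : Measure ℝ) : dTV μ μ = 0 := by
  simp [dTV]

theorem dTV_le_of_forall_continuous {μ ν : Measure ℝ} [IsProbabilityMeasure μ]
    [IsProbabilityMeasure ν] {ε : ℝ}
    (h : ∀ f : ℝ → ℝ, Continuous f → (∀ x, f x ∈ Set.Icc 0 1) →
      |∫ x, f x ∂μ - ∫ x, f x ∂ν| ≤ ε) : dTV μ ν ≤ ε := by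
  have : Nonempty {A : Set ℝ // MeasurableSet A} := ⟨⟨∅, .empty⟩⟩
  refine ciSup_le fun A => ?_
  have hμν : μ.real A ≤ ν.real A + ε := measureReal_le_of_forall_continuous h A.2
  have hνμ : ν.real A ≤ μ.real A + ε :=
    measureReal_le_of_forall_continuous (fun f hf hf01 => by rw [abs_sub_comm]; exact h f hf hf01)
      A.2
  exact abs_sub_le_iff.2 ⟨by linarith! only [hμν], by linarith! only [hνμ]⟩

/-! ### The Gaussian density and integration by parts -/

section GaussianDensity

variable {v : ℝ≥0}

theorem hasDerivAt_gaussianPDFReal_zero (v : ℝ≥0) (x : ℝ) :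
    HasDerivAt (gaussianPDFReal 0 v) (-(x / v) * gaussianPDFReal 0 v x) x := by
  have hexponent : HasDerivAt (fun x : ℝ => -(x - 0) ^ 2 / (2 * v)) (-(x / v)) x := by
    refine (((hasDerivAt_id' x).sub_const 0).pow 2).neg.div_const (2 * (v : ℝ))
      |>.congr_deriv ?_
    by_cases hv : (v : ℝ) = 0
    · simp [hv]
    · simp; field_simp
  rw [gaussianPDFReal_def]
  exact (hexponent.exp.const_mul (Real.sqrt (2 * Real.pi * v))⁻¹).congr_deriv (by ring)

theorem continuous_gaussianPDFReal_zero (v : ℝ≥0) : Continuous (gaussianPDFReal 0 v) :=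
  continuous_iff_continuousAt.2 fun x => (hasDerivAt_gaussianPDFReal_zero v x).continuousAt

theorem integrable_gaussianReal_iff {μ : ℝ} (hv : v ≠ 0) (f : ℝ → ℝ) :
    Integrable f (gaussianReal μ v) ↔ Integrable (fun x => gaussianPDFReal μ v x * f x) := by
  rw [gaussianReal_of_var_ne_zero μ hv,
    integrable_withDensity_iff_integrable_smul' (measurable_gaussianPDF μ v)
      (Eventually.of_forall fun x => gaussianPDF_lt_top)]
  simp [toReal_gaussianPDF]

theorem integrable_id_mul_gaussianPDFReal (hv : v ≠ 0) :
    Integrable (fun y => y * gaussianPDFReal 0 v y) := by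
  have h := (memLp_id_gaussianReal (μ := 0) (v := v) 1).integrable (by simp)
  rw [integrable_gaussianReal_iff hv] at h
  simpa [mul_comm] using h

theorem hasDerivAt_neg_var_mul_gaussianPDFReal (hv : v ≠ 0) (x : ℝ) :
    HasDerivAt (fun x => -(v : ℝ) * gaussianPDFReal 0 v x) (x * gaussianPDFReal 0 v x) x :=
  ((hasDerivAt_gaussianPDFReal_zero v x).const_mul (-(v : ℝ))).congr_deriv (by field_simp)

theorem integral_Ioi_id_mul_gaussianPDFReal (hv : v ≠ 0) (x : ℝ) :
    ∫ y in Set.Ioi x, y * gaussianPDFReal 0 v y = v * gaussianPDFReal 0 v x := by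
  have hi := (integrable_gaussianPDFReal 0 v).const_mul (-(v : ℝ))
  rw [integral_Ioi_of_hasDerivAt_of_tendsto'
    (fun y _ => hasDerivAt_neg_var_mul_gaussianPDFReal hv y)
    (integrable_id_mul_gaussianPDFReal hv).integrableOn
    (tendsto_zero_of_hasDerivAt_of_integrableOn_Ioi (a := x)
      (fun y _ => hasDerivAt_neg_var_mul_gaussianPDFReal hv y)
      (integrable_id_mul_gaussianPDFReal hv).integrableOn hi.integrableOn)]
  ring

theorem integral_Iic_id_mul_gaussianPDFReal (hv : v ≠ 0) (x : ℝ) :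
    ∫ y in Set.Iic x, y * gaussianPDFReal 0 v y = -(v * gaussianPDFReal 0 v x) := by
  have hsplit := intervalIntegral.integral_Iic_add_Ioi (b := x)
    (integrable_id_mul_gaussianPDFReal hv).integrableOn
    (integrable_id_mul_gaussianPDFReal hv).integrableOn
  have hzero : ∫ y, y * gaussianPDFReal 0 v y = 0 := by
    have h := integral_id_gaussianReal (μ := 0) (v := v)
    simpa [integral_gaussianReal_eq_integral_smul hv, mul_comm] using h
  rw [integral_Ioi_id_mul_gaussianPDFReal hv, hzero] at hsplit
  linarith

theorem integral_id_mul_gaussianReal (v : ℝ≥0) {ψ ψ' : ℝ → ℝ} (hd : ∀ x, HasDerivAt ψ (ψ' x) x)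
    (hψ : Integrable ψ (gaussianReal 0 v))
    (hxψ : Integrable (fun x => x * ψ x) (gaussianReal 0 v))
    (hψ' : Integrable ψ' (gaussianReal 0 v)) :
    ∫ x, x * ψ x ∂gaussianReal 0 v = v * ∫ x, ψ' x ∂gaussianReal 0 v := by
  rcases eq_or_ne v 0 with rfl | hv
  · simp
  rw [integral_gaussianReal_eq_integral_smul hv, integral_gaussianReal_eq_integral_smul hv]
  rw [integrable_gaussianReal_iff hv] at hψ hxψ hψ'
  have hparts := integral_eq_zero_of_hasDerivAt_of_integrable
    (f := fun x => -(v : ℝ) * gaussianPDFReal 0 v x * ψ x)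
    (f' := fun x => gaussianPDFReal 0 v x * (x * ψ x) - v * (gaussianPDFReal 0 v x * ψ' x))
    (fun x => ((hasDerivAt_neg_var_mul_gaussianPDFReal hv x).mul (hd x)).congr_deriv (by ring))
    (hxψ.sub (hψ'.const_mul _)) (by simpa only [mul_assoc] using hψ.const_mul (-(v : ℝ)))
  rw [integral_sub hxψ (hψ'.const_mul _), integral_const_mul] at hparts
  simpa only [smul_eq_mul] using sub_eq_zero.1 hparts

end GaussianDensity

/-! ### Stein's equation -/

/-- The solution `φ` of Stein's equation `v φ'(x) - x φ(x) = f x - E[f(N)]`, `N ∼ N(0, v)`, that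
is bounded when `f` is; with `p` the density of `N`, it is the solution for which `v p φ` vanishes
at `-∞`. -/
def steinSolution (v : ℝ≥0) (f : ℝ → ℝ) (x : ℝ) : ℝ :=
  (∫ y in Set.Iic x, gaussianPDFReal 0 v y * (f y - ∫ z, f z ∂gaussianReal 0 v)) /
    (v * gaussianPDFReal 0 v x)

section SteinSolution

variable {v : ℝ≥0} {f : ℝ → ℝ}

theorem integrable_of_continuous_of_mem_Icc {μ : Measure ℝ} [IsFiniteMeasure μ]
    (hf : Continuous f) (hf01 : ∀ x, f x ∈ Set.Icc 0 1) : Integrable f μ :=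
  Integrable.of_bound hf.aestronglyMeasurable 1
    (Eventually.of_forall fun x => abs_le.2 ⟨by linarith [(hf01 x).1], (hf01 x).2⟩)

theorem abs_sub_integral_le_one {μ : Measure ℝ} [IsProbabilityMeasure μ]
    (hf : Continuous f) (hf01 : ∀ x, f x ∈ Set.Icc 0 1) (x : ℝ) :
    |f x - ∫ y, f y ∂μ| ≤ 1 := by
  have hnonneg : 0 ≤ ∫ y, f y ∂μ := integral_nonneg fun y => (hf01 y).1
  have hle : ∫ y, f y ∂μ ≤ 1 := by
    simpa using integral_mono (μ := μ) (integrable_of_continuous_of_mem_Icc hf hf01)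
      (integrable_const (1 : ℝ)) fun y => (hf01 y).2
  exact abs_le.2 ⟨by linarith [(hf01 x).1], by linarith [(hf01 x).2]⟩

theorem integral_gaussianPDFReal_mul_sub (hv : v ≠ 0) (hf : Integrable f (gaussianReal 0 v)) :
    ∫ y, gaussianPDFReal 0 v y * (f y - ∫ z, f z ∂gaussianReal 0 v) = 0 := by
  have h := integral_gaussianReal_eq_integral_smul (μ := 0) hv
    (f := fun y => f y - ∫ z, f z ∂gaussianReal 0 v)
  rw [integral_sub hf (integrable_const _)] at h
  simpa using h.symm

theorem abs_mul_integral_Iic_le (hv : v ≠ 0) {g : ℝ → ℝ} (hg : Integrable g)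
    (hg0 : ∫ y, g y = 0) (hgb : ∀ y, |g y| ≤ gaussianPDFReal 0 v y) (x : ℝ) :
    |x * ∫ y in Set.Iic x, g y| ≤ v * gaussianPDFReal 0 v x := by
  have hint := integrable_id_mul_gaussianPDFReal hv
  rcases le_total 0 x with hx | hx
  · have hsplit := intervalIntegral.integral_Iic_add_Ioi (b := x) hg.integrableOn hg.integrableOn
    rw [hg0] at hsplit
    rw [eq_neg_of_add_eq_zero_left hsplit, mul_neg, abs_neg, ← integral_const_mul,
      ← integral_Ioi_id_mul_gaussianPDFReal hv x, ← Real.norm_eq_abs]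
    refine norm_integral_le_of_norm_le hint.integrableOn ?_
    filter_upwards [ae_restrict_mem measurableSet_Ioi] with y (hy : x < y)
    rw [Real.norm_eq_abs, abs_mul, abs_of_nonneg hx]
    exact mul_le_mul hy.le (hgb y) (abs_nonneg _) (hx.trans hy.le)
  · rw [← integral_const_mul, ← neg_neg ((v : ℝ) * _), ← integral_Iic_id_mul_gaussianPDFReal hv x,
      ← Real.norm_eq_abs, ← integral_neg]
    refine norm_integral_le_of_norm_le hint.neg.integrableOn ?_
    filter_upwards [ae_restrict_mem measurableSet_Iic] with y (hy : y ≤ x)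
    rw [Real.norm_eq_abs, abs_mul, abs_of_nonpos hx, ← neg_mul]
    exact mul_le_mul (by linarith) (hgb y) (abs_nonneg _) (by linarith)

theorem hasDerivAt_integral_Iic {g : ℝ → ℝ} (hgc : Continuous g) (hg : Integrable g) (x : ℝ) :
    HasDerivAt (fun x => ∫ y in Set.Iic x, g y) (g x) x := by
  have h := (intervalIntegral.integral_hasDerivAt_right (hgc.intervalIntegrable 0 x)
    (hgc.stronglyMeasurableAtFilter _ _) hgc.continuousAt).const_add (∫ y in Set.Iic 0, g y)
  refine h.congr_of_eventuallyEq (Eventually.of_forall fun y => ?_)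
  simp only [← intervalIntegral.integral_Iic_sub_Iic (hg.integrableOn (s := Set.Iic 0))
    (hg.integrableOn (s := Set.Iic y)), add_sub_cancel]

theorem continuous_gaussianPDFReal_mul_sub (hf : Continuous f) (c : ℝ) :
    Continuous fun y => gaussianPDFReal 0 v y * (f y - c) :=
  (continuous_gaussianPDFReal_zero v).mul (hf.sub continuous_const)

theorem abs_gaussianPDFReal_mul_sub_le (hf : Continuous f) (hf01 : ∀ x, f x ∈ Set.Icc 0 1)
    (y : ℝ) : |gaussianPDFReal 0 v y * (f y - ∫ z, f z ∂gaussianReal 0 v)| ≤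
      gaussianPDFReal 0 v y := by
  rw [abs_mul, abs_of_nonneg (gaussianPDFReal_nonneg 0 v y)]
  exact mul_le_of_le_one_right (gaussianPDFReal_nonneg 0 v y) (abs_sub_integral_le_one hf hf01 y)

theorem integrable_gaussianPDFReal_mul_sub (hf : Continuous f) (hf01 : ∀ x, f x ∈ Set.Icc 0 1) :
    Integrable fun y => gaussianPDFReal 0 v y * (f y - ∫ z, f z ∂gaussianReal 0 v) :=
  (integrable_gaussianPDFReal 0 v).mono'
    (continuous_gaussianPDFReal_mul_sub hf _).aestronglyMeasurable
    (Eventually.of_forall (abs_gaussianPDFReal_mul_sub_le hf hf01))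

theorem hasDerivAt_steinSolution (hv : v ≠ 0) (hf : Continuous f)
    (hf01 : ∀ x, f x ∈ Set.Icc 0 1) (x : ℝ) :
    HasDerivAt (steinSolution v f)
      ((x * steinSolution v f x + (f x - ∫ y, f y ∂gaussianReal 0 v)) / v) x := by
  have hpos := gaussianPDFReal_pos 0 v x hv
  refine ((hasDerivAt_integral_Iic (continuous_gaussianPDFReal_mul_sub hf _)
    (integrable_gaussianPDFReal_mul_sub hf hf01) x).div
    ((hasDerivAt_gaussianPDFReal_zero v x).const_mul (v : ℝ)) (by positivity)).congr_deriv ?_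
  rw [steinSolution]
  field_simp
  ring

theorem abs_mul_steinSolution_le_one (hv : v ≠ 0) (hf : Continuous f)
    (hf01 : ∀ x, f x ∈ Set.Icc 0 1) (x : ℝ) : |x * steinSolution v f x| ≤ 1 := by
  have hpos : 0 < v * gaussianPDFReal 0 v x :=
    mul_pos (by positivity) (gaussianPDFReal_pos 0 v x hv)
  rw [steinSolution, ← mul_div_assoc, abs_div, abs_of_pos hpos, div_le_one hpos]
  exact abs_mul_integral_Iic_le hv (integrable_gaussianPDFReal_mul_sub hf hf01)
    (integral_gaussianPDFReal_mul_sub hv (integrable_of_continuous_of_mem_Icc hf hf01))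
    (abs_gaussianPDFReal_mul_sub_le hf hf01) x

theorem continuous_steinSolution (hv : v ≠ 0) (hf : Continuous f)
    (hf01 : ∀ x, f x ∈ Set.Icc 0 1) : Continuous (steinSolution v f) :=
  continuous_iff_continuousAt.2 fun x => (hasDerivAt_steinSolution hv hf hf01 x).continuousAt

theorem exists_forall_abs_steinSolution_le (hv : v ≠ 0) (hf : Continuous f)
    (hf01 : ∀ x, f x ∈ Set.Icc 0 1) : ∃ C, ∀ x, |steinSolution v f x| ≤ C := by
  obtain ⟨C, hC⟩ := (isCompact_Icc (a := (-1 : ℝ)) (b := 1)).exists_bound_of_continuousOn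
    (continuous_steinSolution hv hf hf01).continuousOn
  refine ⟨max C 1, fun x => ?_⟩
  by_cases hx : |x| ≤ 1
  · exact (hC x (abs_le.1 hx)).trans (le_max_left _ _)
  · refine le_trans ?_ (le_max_right _ _)
    have h := abs_mul_steinSolution_le_one hv hf hf01 x
    rw [abs_mul] at h
    nlinarith [abs_nonneg (steinSolution v f x)]

theorem steinSolution_equation (hv : v ≠ 0) (hf : Continuous f) (hf01 : ∀ x, f x ∈ Set.Icc 0 1)
    (x : ℝ) : v * deriv (steinSolution v f) x - x * steinSolution v f x =
      f x - ∫ y, f y ∂gaussianReal 0 v := by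
  rw [(hasDerivAt_steinSolution hv hf hf01 x).deriv]
  field_simp
  ring

theorem continuous_deriv_steinSolution (hv : v ≠ 0) (hf : Continuous f)
    (hf01 : ∀ x, f x ∈ Set.Icc 0 1) : Continuous (deriv (steinSolution v f)) := by
  have hφ := continuous_steinSolution hv hf hf01
  rw [funext fun x => (hasDerivAt_steinSolution hv hf hf01 x).deriv]
  fun_prop

theorem abs_deriv_steinSolution_le (hv : v ≠ 0) (hf : Continuous f)
    (hf01 : ∀ x, f x ∈ Set.Icc 0 1) (x : ℝ) : |deriv (steinSolution v f) x| ≤ 2 / v := by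
  rw [(hasDerivAt_steinSolution hv hf hf01 x).deriv, abs_div, NNReal.abs_eq]
  gcongr
  refine (abs_add_le _ _).trans ?_
  linarith [abs_mul_steinSolution_le_one hv hf hf01 x,
    abs_sub_integral_le_one (μ := gaussianReal 0 v) hf hf01 x]

end SteinSolution

/-! ### Stein kernels -/

/-- `T` is a Stein kernel of `U` pulled back to `Ω`, that is `E[U φ(U)] = E[T φ'(U)]` for all `C¹`
functions `φ` that are bounded together with their derivative. For `U ∼ N(0, v)` one may take
`T = v`, and in general the distance of `T` to `v` controls that of `U` to `N(0, v)`. -/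
def IsSteinKernel {Ω : Type*} {_ : MeasurableSpace Ω} (U T : Ω → ℝ) (P : Measure Ω) : Prop :=
  ∀ ⦃φ φ' : ℝ → ℝ⦄, (∀ x, HasDerivAt φ (φ' x) x) → Continuous φ' → (∃ C, ∀ x, |φ x| ≤ C) →
    (∃ C, ∀ x, |φ' x| ≤ C) → ∫ ω, U ω * φ (U ω) ∂P = ∫ ω, T ω * φ' (U ω) ∂P

namespace IsSteinKernel

variable {Ω : Type*} {mΩ : MeasurableSpace Ω} {P : Measure Ω} {U T : Ω → ℝ}

theorem const_mul (h : IsSteinKernel U T P) (c : ℝ) :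
    IsSteinKernel (fun ω => c * U ω) (fun ω => c ^ 2 * T ω) P := by
  rintro φ φ' hφ hφ' ⟨C, hC⟩ ⟨C', hC'⟩
  have hscaled := h (φ := fun x => φ (c * x)) (φ' := fun x => φ' (c * x) * c)
    (fun x => (hφ (c * x)).comp x (((hasDerivAt_id' x).const_mul c).congr_deriv (mul_one c)))
    (by fun_prop) ⟨C, fun x => hC (c * x)⟩
    ⟨C' * |c|, fun x => by rw [abs_mul]; gcongr; exact hC' (c * x)⟩
  simp only [mul_assoc, integral_const_mul, hscaled]
  rw [← integral_const_mul, ← integral_const_mul]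
  exact integral_congr_ae (Eventually.of_forall fun ω => by ring)

variable [IsProbabilityMeasure P]

theorem integral_map_sub_integral_gaussianReal (h : IsSteinKernel U T P) (hUm : Measurable U)
    (hU : Integrable U P) (hT : Integrable T P) {v : ℝ≥0} (hv : v ≠ 0) {f : ℝ → ℝ}
    (hf : Continuous f) (hf01 : ∀ x, f x ∈ Set.Icc 0 1) :
    ∫ x, f x ∂P.map U - ∫ x, f x ∂gaussianReal 0 v =
      ∫ ω, (v - T ω) * deriv (steinSolution v f) (U ω) ∂P := by
  have φ_cont := continuous_steinSolution hv hf hf01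
  have φ'_cont := continuous_deriv_steinSolution hv hf hf01
  have φ'_le := abs_deriv_steinSolution_le hv hf hf01
  obtain ⟨C, φ_le⟩ := exists_forall_abs_steinSolution_le hv hf hf01
  have fU_int : Integrable (fun ω => f (U ω)) P :=
    (integrable_map_measure hf.aestronglyMeasurable hUm.aemeasurable).1
      (by have := Measure.isProbabilityMeasure_map (μ := P) hUm.aemeasurable
          exact integrable_of_continuous_of_mem_Icc hf hf01)
  have φ'U_int {X : Ω → ℝ} (hX : Integrable X P) :
      Integrable (fun ω => X ω * deriv (steinSolution v f) (U ω)) P :=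
    hX.mul_bdd (φ'_cont.measurable.comp hUm).aestronglyMeasurable
      (Eventually.of_forall fun ω => φ'_le (U ω))
  have UφU_int : Integrable (fun ω => U ω * steinSolution v f (U ω)) P :=
    hU.mul_bdd (φ_cont.measurable.comp hUm).aestronglyMeasurable
      (Eventually.of_forall fun ω => φ_le (U ω))
  calc ∫ x, f x ∂P.map U - ∫ x, f x ∂gaussianReal 0 v
      = ∫ ω, (f (U ω) - ∫ x, f x ∂gaussianReal 0 v) ∂P := by
        rw [integral_map hUm.aemeasurable hf.aestronglyMeasurable,
          integral_sub fU_int (integrable_const _), integral_const, probReal_univ, one_smul]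
    _ = ∫ ω, v * deriv (steinSolution v f) (U ω) ∂P - ∫ ω, U ω * steinSolution v f (U ω) ∂P := by
        simp only [← steinSolution_equation hv hf hf01]
        exact integral_sub (φ'U_int (integrable_const _)) UφU_int
    _ = ∫ ω, (v - T ω) * deriv (steinSolution v f) (U ω) ∂P := by
        rw [h (fun x => (hasDerivAt_steinSolution hv hf hf01 x).differentiableAt.hasDerivAt)
          φ'_cont ⟨C, φ_le⟩ ⟨_, φ'_le⟩, ← integral_sub (φ'U_int (integrable_const _)) (φ'U_int hT)]
        simp only [sub_mul]

theorem dTV_map_gaussianReal_le (h : IsSteinKernel U T P) (hUm : Measurable U)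
    (hU : Integrable U P) (hT : Integrable T P) {v : ℝ≥0} (hv : v ≠ 0) :
    dTV (P.map U) (gaussianReal 0 v) ≤ 2 / v * ∫ ω, |T ω - v| ∂P := by
  have := Measure.isProbabilityMeasure_map (μ := P) hUm.aemeasurable
  refine dTV_le_of_forall_continuous fun f hf hf01 => ?_
  rw [h.integral_map_sub_integral_gaussianReal hUm hU hT hv hf hf01, ← integral_const_mul,
    ← Real.norm_eq_abs]
  refine norm_integral_le_of_norm_le ((hT.sub (integrable_const _)).abs.const_mul _)
    (Eventually.of_forall fun ω => ?_)
  rw [Real.norm_eq_abs, abs_mul, abs_sub_comm, mul_comm]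
  gcongr
  exact abs_deriv_steinSolution_le hv hf hf01 (U ω)

theorem dTV_map_gaussianReal_le_sqrt_variance (h : IsSteinKernel U T P) (hUm : Measurable U)
    (hU : Integrable U P) (hT : MemLp T 2 P) {v : ℝ≥0} (hv : v ≠ 0) :
    dTV (P.map U) (gaussianReal 0 v) ≤
      2 / v * (√(Var[T; P]) + |∫ ω, T ω ∂P - v|) := by
  refine (h.dTV_map_gaussianReal_le hUm hU (hT.integrable one_le_two) hv).trans ?_
  gcongr
  have hcentered : MemLp (fun ω => T ω - ∫ ω, T ω ∂P) 2 P := hT.sub (memLp_const _)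
  have abs_le_sqrt : ∫ ω, |T ω - ∫ ω, T ω ∂P| ∂P ≤ √(Var[T; P]) := by
    refine Real.le_sqrt_of_sq_le ?_
    have := variance_nonneg (fun ω => |T ω - ∫ ω, T ω ∂P|) P
    rw [variance_eq_sub (X := fun ω => |T ω - ∫ ω, T ω ∂P|) hcentered.abs] at this
    rw [variance_eq_integral hT.1.aemeasurable]
    simpa [sq_abs] using this
  calc ∫ ω, |T ω - v| ∂P
      ≤ ∫ ω, (|T ω - ∫ ω, T ω ∂P| + |∫ ω, T ω ∂P - v|) ∂P :=
        integral_mono ((hT.integrable one_le_two).sub (integrable_const _)).abs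
          ((hcentered.integrable one_le_two).abs.add (integrable_const _))
          fun ω => abs_sub_le _ _ _
    _ ≤ _ := by
        rw [integral_add (hcentered.integrable one_le_two).abs (integrable_const _)]
        simpa using abs_le_sqrt

end IsSteinKernel

/-! ### Random variables with all moments -/

/-- All absolute moments of `X` are finite; unlike integrability, this is stable under products. -/
@[fun_prop]
def HasMoments {Ω : Type*} {_ : MeasurableSpace Ω} (X : Ω → ℝ) (P : Measure Ω) : Prop :=
  ∀ p : ℝ≥0, MemLp X p P

namespace HasMoments

variable {Ω : Type*} {mΩ : MeasurableSpace Ω} {P : Measure Ω} {X Y : Ω → ℝ}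

theorem memLp_two (hX : HasMoments X P) : MemLp X 2 P := by simpa using hX 2

theorem integrable (hX : HasMoments X P) : Integrable X P :=
  memLp_one_iff_integrable.1 (by simpa using hX 1)

@[fun_prop]
theorem add (hX : HasMoments X P) (hY : HasMoments Y P) : HasMoments (fun ω => X ω + Y ω) P :=
  fun p => (hX p).add (hY p)

@[fun_prop]
theorem mul (hX : HasMoments X P) (hY : HasMoments Y P) : HasMoments (fun ω => X ω * Y ω) P := by
  intro p
  have : ENNReal.HolderTriple ((2 * p : ℝ≥0) : ℝ≥0∞) ((2 * p : ℝ≥0) : ℝ≥0∞) (p : ℝ≥0∞) := by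
    constructor
    rw [ENNReal.coe_mul, ENNReal.mul_inv (by simp) (by simp), ← add_mul]
    simp [ENNReal.inv_two_add_inv_two]
  exact (hY (2 * p)).mul (hX (2 * p))

@[fun_prop]
theorem sum {ι : Type*} {s : Finset ι} {X : ι → Ω → ℝ} (h : ∀ i, HasMoments (X i) P) :
    HasMoments (fun ω => ∑ i ∈ s, X i ω) P :=
  fun p => memLp_finsetSum s fun i _ => h i p

variable [IsFiniteMeasure P]

theorem of_bounded (hX : Measurable X) {C : ℝ} (h : ∀ ω, |X ω| ≤ C) : HasMoments X P :=
  fun _ => MemLp.of_bound hX.aestronglyMeasurable C (Eventually.of_forall h)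

@[fun_prop]
theorem const (c : ℝ) : HasMoments (fun _ : Ω => c) P := fun _ => memLp_const c

@[fun_prop]
theorem pow (hX : HasMoments X P) (n : ℕ) : HasMoments (fun ω => X ω ^ n) P := by
  induction n with
  | zero => simpa using const 1
  | succ n ih => simpa [pow_succ] using ih.mul hX

@[fun_prop]
theorem polynomial_eval (hX : HasMoments X P) (A : Polynomial ℝ) :
    HasMoments (fun ω => A.eval (X ω)) P := by
  simp only [Polynomial.eval_eq_sum_range]
  fun_prop

@[fun_prop]
theorem multiset_prod {ι : Type*} {Z : ι → Ω → ℝ} (hZ : ∀ i, HasMoments (Z i) P)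
    (s : Multiset ι) : HasMoments (fun ω => (s.map fun i => Z i ω).prod) P := by
  induction s using Multiset.induction_on with
  | empty => simpa using const 1
  | cons i s ih => simpa using (hZ i).mul ih

end HasMoments

/-! ### Hermite polynomials and the Gaussian divergence -/

section Polynomials

open Polynomial

/-- The Gaussian divergence `δ A = X A - A'`, the adjoint of differentiation in `L²(N(0, 1))`. -/
def divergence : ℝ[X] →ₗ[ℝ] ℝ[X] :=
  LinearMap.mulLeft ℝ X - derivative

theorem divergence_apply (A : ℝ[X]) : divergence A = X * A - derivative A := rfl

theorem eval_divergence (A : ℝ[X]) (x : ℝ) :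
    (divergence A).eval x = x * A.eval x - (derivative A).eval x := by
  simp [divergence_apply]

/-- The `m`-th probabilists' Hermite polynomial with real coefficients. -/
def hermiteR (m : ℕ) : ℝ[X] := (hermite m).map (Int.castRingHom ℝ)

theorem hermiteFun_eq_eval (m : ℕ) (x : ℝ) : hermiteFun m x = (hermiteR m).eval x := by
  rw [hermiteFun, hermiteR, aeval_def, eval₂_eq_eval_map]
  rfl

theorem hermiteR_zero : hermiteR 0 = 1 := by simp [hermiteR]

theorem divergence_hermiteR (m : ℕ) : divergence (hermiteR m) = hermiteR (m + 1) := by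
  simp [divergence_apply, hermiteR, hermite_succ, derivative_map]

theorem derivative_hermiteR_succ (m : ℕ) :
    derivative (hermiteR (m + 1)) = ((m : ℝ) + 1) • hermiteR m := by
  induction m with
  | zero => simp [← divergence_hermiteR, divergence_apply, hermiteR_zero]
  | succ m ih =>
    rw [← divergence_hermiteR (m + 1), divergence_apply, derivative_sub, derivative_mul, ih,
      derivative_X, derivative_smul, ← divergence_hermiteR m, divergence_apply, Nat.cast_succ]
    simp only [smul_eq_C_mul, map_add, map_one]
    ring

theorem coeff_hermiteR_of_odd_add {m k : ℕ} (h : Odd (m + k)) : (hermiteR m).coeff k = 0 := by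
  simp [hermiteR, coeff_hermite_of_odd_add h]

end Polynomials

/-! ### Centered Gaussian families -/

theorem hasDerivAt_comp_add_smul {E : Type*} [AddCommGroup E] [Module ℝ E] {Φ Φ' : E → ℝ} {v : E}
    (hd : ∀ x, HasLineDerivAt ℝ Φ (Φ' x) x v) (w : E) (t : ℝ) :
    HasDerivAt (fun t : ℝ => Φ (w + t • v)) (Φ' (w + t • v)) t := by
  have h := hd (w + t • v)
  rw [HasLineDerivAt, ← sub_self t] at h
  simpa [add_assoc, ← add_smul] using h.comp_sub_const t t

/-- `Z` is a centered Gaussian family with covariance `K`. -/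
structure IsCenteredGaussian {Ω ι : Type*} {mΩ : MeasurableSpace Ω} (Z : ι → Ω → ℝ)
    (K : ι → ι → ℝ) (P : Measure Ω) : Prop where
  measurable : ∀ i, Measurable (Z i)
  isGaussianProcess : IsGaussianProcess Z P
  integral_eq_zero : ∀ i, ∫ ω, Z i ω ∂P = 0
  integral_mul : ∀ i j, ∫ ω, Z i ω * Z j ω ∂P = K i j

namespace IsCenteredGaussian

variable {Ω ι : Type*} {mΩ : MeasurableSpace Ω} {P : Measure Ω} {Z : ι → Ω → ℝ} {K : ι → ι → ℝ}

theorem isProbabilityMeasure (hZ : IsCenteredGaussian Z K P) : IsProbabilityMeasure P :=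
  hZ.isGaussianProcess.isProbabilityMeasure

theorem comp {κ : Type*} (hZ : IsCenteredGaussian Z K P) (φ : κ → ι) :
    IsCenteredGaussian (fun i => Z (φ i)) (fun i j => K (φ i) (φ j)) P where
  measurable i := hZ.measurable (φ i)
  isGaussianProcess := hZ.isGaussianProcess.comp_right φ
  integral_eq_zero i := hZ.integral_eq_zero (φ i)
  integral_mul i j := hZ.integral_mul (φ i) (φ j)

theorem hasMoments (hZ : IsCenteredGaussian Z K P) (i : ι) : HasMoments (Z i) P :=
  fun _ => (hZ.isGaussianProcess.hasGaussianLaw_eval i).memLp ENNReal.coe_ne_top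

theorem cov_eq (hZ : IsCenteredGaussian Z K P) (i j : ι) : cov[Z i, Z j; P] = K i j := by
  have := hZ.isProbabilityMeasure
  rw [covariance_eq_sub (hZ.hasMoments i).memLp_two (hZ.hasMoments j).memLp_two]
  simp [hZ.integral_eq_zero, hZ.integral_mul]

theorem map_eq_gaussianReal (hZ : IsCenteredGaussian Z K P) (i : ι) :
    P.map (Z i) = gaussianReal 0 (K i i).toNNReal := by
  rw [(hZ.isGaussianProcess.hasGaussianLaw_eval i).map_eq_gaussianReal, hZ.integral_eq_zero,
    ← covariance_self (hZ.measurable i).aemeasurable, hZ.cov_eq]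

theorem cov_symm (hZ : IsCenteredGaussian Z K P) (i j : ι) : K i j = K j i := by
  simp only [← hZ.integral_mul, mul_comm]

theorem cov_self_nonneg (hZ : IsCenteredGaussian Z K P) (i : ι) : 0 ≤ K i i := by
  rw [← hZ.integral_mul]
  exact integral_nonneg fun ω => mul_self_nonneg _

theorem abs_cov_le_one (hZ : IsCenteredGaussian Z K P) (hK : ∀ i, K i i = 1) (i j : ι) :
    |K i j| ≤ 1 := by
  have hint (i j : ι) : Integrable (fun ω => Z i ω * Z j ω) P :=
    ((hZ.hasMoments i).mul (hZ.hasMoments j)).integrable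
  calc |K i j| ≤ ∫ ω, (Z i ω * Z i ω + Z j ω * Z j ω) / 2 ∂P := by
        rw [← hZ.integral_mul, ← Real.norm_eq_abs]
        refine norm_integral_le_of_norm_le (((hint i i).add (hint j j)).div_const 2)
          (Eventually.of_forall fun ω => abs_le.2 ⟨?_, ?_⟩)
        · nlinarith [sq_nonneg (Z i ω + Z j ω)]
        · nlinarith [sq_nonneg (Z i ω - Z j ω)]
    _ = 1 := by
        rw [integral_div, integral_add (hint i i) (hint j j)]
        simp [hZ.integral_mul, hK]

theorem ae_eq_zero_of_variance_eq_zero (hZ : IsCenteredGaussian Z K P) {i : ι} (hi : K i i = 0) :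
    Z i =ᵐ[P] 0 := by
  have hsq := (integral_eq_zero_iff_of_nonneg (fun ω => mul_self_nonneg (Z i ω))
    ((hZ.hasMoments i).mul (hZ.hasMoments i)).integrable).1 (hi ▸ hZ.integral_mul i i)
  filter_upwards [hsq] with ω hω using mul_self_eq_zero.1 hω

theorem cov_eq_zero_of_variance_eq_zero (hZ : IsCenteredGaussian Z K P) {i : ι} (hi : K i i = 0) :
    K i = 0 := by
  funext j
  rw [← hZ.integral_mul i j, integral_eq_zero_of_ae, Pi.zero_apply]
  filter_upwards [hZ.ae_eq_zero_of_variance_eq_zero hi] with ω hω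
  simp [hω]

/-- The residual of the linear regression of `Z` on `Z i`. -/
def residual (Z : ι → Ω → ℝ) (K : ι → ι → ℝ) (i : ι) (ω : Ω) : ι → ℝ :=
  fun j => Z j ω - K i j / K i i * Z i ω

theorem residual_add_smul (Z : ι → Ω → ℝ) (K : ι → ι → ℝ) (i : ι) (ω : Ω) :
    residual Z K i ω + Z i ω • ((K i i)⁻¹ • K i) = (Z · ω) := by
  ext j
  simp only [residual, Pi.add_apply, Pi.smul_apply, smul_eq_mul]
  ring

theorem measurable_residual (hZ : IsCenteredGaussian Z K P) (i : ι) :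
    Measurable (residual Z K i) :=
  measurable_pi_lambda _ fun j => (hZ.measurable j).sub ((hZ.measurable i).const_mul _)

theorem indepFun_residual (hZ : IsCenteredGaussian Z K P) {i : ι} (hi : K i i ≠ 0) :
    IndepFun (residual Z K i) (Z i) P := by
  have := hZ.isProbabilityMeasure
  have hL2 (j : ι) := (hZ.hasMoments j).memLp_two
  refine (((IsGaussianProcess.indepFun_of_covariance_eq_zero (X := fun _ : Unit => Z i)
    (Y := fun j ω => residual Z K i ω j) ?_ (fun _ => (hZ.measurable i).aemeasurable)
    (fun j => (measurable_pi_apply j |>.comp (hZ.measurable_residual i)).aemeasurable) ?_).comp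
    (φ := fun x : Unit → ℝ => x ()) (by fun_prop) measurable_id).symm)
  · refine hZ.isGaussianProcess.of_isGaussianProcess fun s => ?_
    classical
    rcases s with _ | j
    · exact ⟨{i}, ContinuousLinearMap.proj ⟨i, by simp⟩, fun ω => by simp⟩
    · exact ⟨{i, j}, ContinuousLinearMap.proj ⟨j, by simp⟩ -
        (K i j / K i i) • ContinuousLinearMap.proj ⟨i, by simp⟩, fun ω => by simp [residual]⟩
  · intro _ j
    simp only [residual]
    rw [covariance_fun_sub_right (hL2 i) (hL2 j) ((hL2 i).const_mul _), covariance_const_mul_right,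
      hZ.cov_eq, hZ.cov_eq, div_mul_cancel₀ _ hi, sub_self]

theorem measurePreserving_residual_prodMk (hZ : IsCenteredGaussian Z K P) {i : ι}
    (hi : K i i ≠ 0) :
    MeasurePreserving (fun ω => (residual Z K i ω, Z i ω)) P
      ((P.map (residual Z K i)).prod (gaussianReal 0 (K i i).toNNReal)) where
  measurable := (hZ.measurable_residual i).prodMk (hZ.measurable i)
  map_eq := by
    have := hZ.isProbabilityMeasure
    rw [← hZ.map_eq_gaussianReal]
    exact (indepFun_iff_map_prod_eq_prod_map_map (hZ.measurable_residual i).aemeasurable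
      (hZ.measurable i).aemeasurable).1 (hZ.indepFun_residual hi)

theorem integral_mul_eq_of_variance_ne_zero (hZ : IsCenteredGaussian Z K P) {i : ι}
    (hi : K i i ≠ 0) {Φ Φ' : (ι → ℝ) → ℝ} (hΦ : Measurable Φ) (hΦ' : Measurable Φ')
    (hd : ∀ x, HasLineDerivAt ℝ Φ (Φ' x) x (K i))
    (iΦ : Integrable (fun ω => Φ (Z · ω)) P) (iZΦ : Integrable (fun ω => Z i ω * Φ (Z · ω)) P)
    (iΦ' : Integrable (fun ω => Φ' (Z · ω)) P) :
    ∫ ω, Z i ω * Φ (Z · ω) ∂P = ∫ ω, Φ' (Z · ω) ∂P := by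
  have := hZ.isProbabilityMeasure
  have := Measure.isProbabilityMeasure_map (μ := P) (hZ.measurable_residual i).aemeasurable
  set ν := (P.map (residual Z K i)).prod (gaussianReal 0 (K i i).toNNReal)
  have hν : MeasurePreserving (fun ω => (residual Z K i ω, Z i ω)) P ν :=
    hZ.measurePreserving_residual_prodMk hi
  set S : (ι → ℝ) × ℝ → ι → ℝ := fun p => p.1 + p.2 • ((K i i)⁻¹ • K i) with hS
  have S_meas : Measurable S := by
    refine measurable_pi_lambda _ fun j => ?_
    simp only [hS, Pi.add_apply, Pi.smul_apply]
    fun_prop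
  have integral_eq {F : (ι → ℝ) × ℝ → ℝ} (hF : Measurable F) :
      ∫ ω, F (residual Z K i ω, Z i ω) ∂P = ∫ p, F p ∂ν := by
    rw [← hν.map_eq, integral_map hν.measurable.aemeasurable hF.aestronglyMeasurable]
  have integrable_iff {F : (ι → ℝ) × ℝ → ℝ} (hF : Measurable F) :
      Integrable (fun ω => F (residual Z K i ω, Z i ω)) P ↔ Integrable F ν :=
    hν.integrable_comp hF.aestronglyMeasurable
  have hΦS : Measurable fun p => Φ (S p) := hΦ.comp S_meas
  have hZΦS : Measurable fun p : (ι → ℝ) × ℝ => p.2 * Φ (S p) := measurable_snd.mul hΦS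
  have hΦ'S : Measurable fun p => Φ' (S p) := hΦ'.comp S_meas
  simp only [← residual_add_smul Z K i] at iΦ iZΦ iΦ' ⊢
  replace iΦ := (integrable_iff hΦS).1 iΦ
  replace iZΦ := (integrable_iff hZΦS).1 iZΦ
  replace iΦ' := (integrable_iff hΦ'S).1 iΦ'
  refine ((integral_eq hZΦS).trans ?_).trans (integral_eq hΦ'S).symm
  rw [integral_prod _ iZΦ, integral_prod _ iΦ']
  refine integral_congr_ae ?_
  filter_upwards [iΦ.prod_right_ae, iZΦ.prod_right_ae, iΦ'.prod_right_ae] with w iw iZw iw'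
  refine (integral_id_mul_gaussianReal _
    (hasDerivAt_comp_add_smul (fun x => (hd x).smul (K i i)⁻¹) w)
    iw iZw (iw'.const_mul (K i i)⁻¹)).trans ?_
  simp only [smul_eq_mul, integral_const_mul]
  rw [Real.coe_toNNReal _ (hZ.cov_self_nonneg i), mul_inv_cancel_left₀ hi]

/-- Conditionally on the residual, which is independent of `Z i`, this is integration by parts on
the line. -/
theorem integral_mul_eq_integral_lineDeriv (hZ : IsCenteredGaussian Z K P) (i : ι)
    {Φ Φ' : (ι → ℝ) → ℝ} (hΦ : Measurable Φ) (hΦ' : Measurable Φ')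
    (hd : ∀ x, HasLineDerivAt ℝ Φ (Φ' x) x (K i))
    (iΦ : Integrable (fun ω => Φ (Z · ω)) P) (iZΦ : Integrable (fun ω => Z i ω * Φ (Z · ω)) P)
    (iΦ' : Integrable (fun ω => Φ' (Z · ω)) P) :
    ∫ ω, Z i ω * Φ (Z · ω) ∂P = ∫ ω, Φ' (Z · ω) ∂P := by
  by_cases hi : K i i = 0
  · have Φ'_eq_zero (x : ι → ℝ) : Φ' x = 0 :=
      (hZ.cov_eq_zero_of_variance_eq_zero hi ▸ hd x).unique hasLineDerivAt_zero
    simp only [Φ'_eq_zero, integral_zero]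
    refine integral_eq_zero_of_ae ?_
    filter_upwards [hZ.ae_eq_zero_of_variance_eq_zero hi] with ω hω
    simp [hω]
  · exact hZ.integral_mul_eq_of_variance_ne_zero hi hΦ hΦ' hd iΦ iZΦ iΦ'

end IsCenteredGaussian

/-! ### Polynomial functionals of a Gaussian family -/

section LineDeriv

variable {ι : Type*}

theorem hasLineDerivAt_polynomial_eval (A : Polynomial ℝ) (i : ι) (x v : ι → ℝ) :
    HasLineDerivAt ℝ (fun x : ι → ℝ => A.eval (x i)) (v i * A.derivative.eval (x i)) x v := by
  have hline : HasDerivAt (fun t : ℝ => (x + t • v) i) (v i) 0 := by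
    simpa using ((hasDerivAt_id' (0 : ℝ)).mul_const (v i)).const_add (x i)
  refine ((A.hasDerivAt ((x + (0 : ℝ) • v) i)).comp (0 : ℝ) hline).congr_deriv ?_
  simp [mul_comm]

theorem hasLineDerivAt_comp_sum_polynomial_eval {φ φ' : ℝ → ℝ}
    (hφ : ∀ x, HasDerivAt φ (φ' x) x) (A : Polynomial ℝ) (s : Finset ι) (x v : ι → ℝ) :
    HasLineDerivAt ℝ (fun x : ι → ℝ => φ (∑ i ∈ s, A.eval (x i)))
      (φ' (∑ i ∈ s, A.eval (x i)) * ∑ i ∈ s, v i * A.derivative.eval (x i)) x v := by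
  have hline : HasDerivAt (fun t : ℝ => ∑ i ∈ s, A.eval ((x + t • v) i))
      (∑ i ∈ s, v i * A.derivative.eval (x i)) 0 :=
    HasDerivAt.fun_sum fun i _ => hasLineDerivAt_polynomial_eval A i x v
  refine ((hφ (∑ i ∈ s, A.eval ((x + (0 : ℝ) • v) i))).comp (0 : ℝ) hline).congr_deriv ?_
  simp

theorem hasLineDerivAt_multiset_prod [DecidableEq ι] (s : Multiset ι) (x v : ι → ℝ) :
    HasLineDerivAt ℝ (fun x : ι → ℝ => (s.map x).prod)
      (s.map fun j => v j * ((s.erase j).map x).prod).sum x v := by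
  have hline (j : ι) : HasDerivAt (fun t : ℝ => (x + t • v) j) (v j) 0 := by
    simpa using ((hasDerivAt_id' (0 : ℝ)).mul_const (v j)).const_add (x j)
  have hprod := HasFDerivAt.multiset_prod (u := s) fun j _ => (hline j).hasFDerivAt
  refine hprod.hasDerivAt.congr_deriv ?_
  rw [← ContinuousLinearMap.apply_apply (𝕜 := ℝ) (1 : ℝ), map_multiset_sum, Multiset.map_map]
  simp [mul_comm]

end LineDeriv

theorem measurable_polynomial_eval (A : Polynomial ℝ) : Measurable fun x : ℝ => A.eval x :=
  A.continuous.measurable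

attribute [fun_prop] measurable_polynomial_eval

/-- The quadratic-type functional `∑ᵢⱼ Kᵢⱼ A(zᵢ) B(zⱼ)`. For `B = (δ A)'` and a Gaussian family
`z` of covariance `K`, it is the Stein kernel of `∑ᵢ (δ A)(zᵢ)`. -/
def covForm {ι : Type*} (K : ι → ι → ℝ) (A B : Polynomial ℝ) (s : Finset ι) (z : ι → ℝ) : ℝ :=
  ∑ i ∈ s, ∑ j ∈ s, K i j * (A.eval (z i) * B.eval (z j))

namespace IsCenteredGaussian

variable {Ω ι : Type*} {mΩ : MeasurableSpace Ω} {P : Measure Ω} {Z : ι → Ω → ℝ} {K : ι → ι → ℝ}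

theorem integral_divergence_mul (hZ : IsCenteredGaussian Z K P) {i : ι} (hi : K i i = 1)
    (A : Polynomial ℝ) {Φ Φ' : (ι → ℝ) → ℝ} (hΦ : Measurable Φ) (hΦ' : Measurable Φ')
    (hd : ∀ x, HasLineDerivAt ℝ Φ (Φ' x) x (K i)) (mΦ : HasMoments (fun ω => Φ (Z · ω)) P)
    (mΦ' : HasMoments (fun ω => Φ' (Z · ω)) P) :
    ∫ ω, (divergence A).eval (Z i ω) * Φ (Z · ω) ∂P =
      ∫ ω, A.eval (Z i ω) * Φ' (Z · ω) ∂P := by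
  have := hZ.isProbabilityMeasure
  have mZ := hZ.hasMoments
  have product_rule (x : ι → ℝ) : HasLineDerivAt ℝ (fun x => A.eval (x i) * Φ x)
      (A.derivative.eval (x i) * Φ x + A.eval (x i) * Φ' x) x (K i) := by
    refine (HasDerivAt.mul (hasLineDerivAt_polynomial_eval A i x (K i)) (hd x)).congr_deriv ?_
    simp [hi]
  have mAΦ := ((mZ i).polynomial_eval A).mul mΦ
  have mA'Φ := ((mZ i).polynomial_eval A.derivative).mul mΦ
  have mAΦ' := ((mZ i).polynomial_eval A).mul mΦ'
  have hparts := hZ.integral_mul_eq_integral_lineDeriv i (by fun_prop) (by fun_prop) product_rule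
    mAΦ.integrable ((mZ i).mul mAΦ).integrable (mA'Φ.add mAΦ').integrable
  rw [integral_add mA'Φ.integrable mAΦ'.integrable] at hparts
  simp only [eval_divergence, sub_mul, mul_assoc]
  rw [integral_sub ((mZ i).mul mAΦ).integrable mA'Φ.integrable, hparts, add_sub_cancel_left]

theorem integral_divergence_mul_eval (hZ : IsCenteredGaussian Z K P) {i : ι} (hi : K i i = 1)
    (A B : Polynomial ℝ) (j : ι) :
    ∫ ω, (divergence A).eval (Z i ω) * B.eval (Z j ω) ∂P =
      K i j * ∫ ω, A.eval (Z i ω) * B.derivative.eval (Z j ω) ∂P := by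
  have := hZ.isProbabilityMeasure
  have mZ := hZ.hasMoments
  rw [hZ.integral_divergence_mul hi A (by fun_prop) (by fun_prop)
    (fun x => hasLineDerivAt_polynomial_eval B j x (K i)) (by fun_prop) (by fun_prop),
    ← integral_const_mul]
  simp only [mul_left_comm]

theorem integral_hermiteR_mul_hermiteR (hZ : IsCenteredGaussian Z K P) {i j : ι}
    (hi : K i i = 1) (hj : K j j = 1) (m l : ℕ) :
    ∫ ω, (hermiteR m).eval (Z i ω) * (hermiteR l).eval (Z j ω) ∂P =
      if m = l then (m.factorial : ℝ) * K i j ^ m else 0 := by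
  have := hZ.isProbabilityMeasure
  induction m generalizing l with
  | zero =>
    rcases l with _ | l
    · simp [hermiteR_zero]
    · have h := hZ.integral_divergence_mul_eval hj (hermiteR l) 1 i
      simpa [divergence_hermiteR, hermiteR_zero] using h
  | succ m ih =>
    rw [← divergence_hermiteR m, hZ.integral_divergence_mul_eval hi]
    rcases l with _ | l
    · simp [hermiteR_zero]
    · simp only [derivative_hermiteR_succ, Polynomial.eval_smul, smul_eq_mul, mul_left_comm,
        integral_const_mul, ih l, add_left_inj]
      split_ifs with hml
      · subst hml
        rw [Nat.factorial_succ, Nat.cast_mul, Nat.cast_succ]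
        ring
      · simp

theorem hasMoments_covForm (hZ : IsCenteredGaussian Z K P) (A B : Polynomial ℝ) (s : Finset ι) :
    HasMoments (fun ω => covForm K A B s (Z · ω)) P := by
  have := hZ.isProbabilityMeasure
  have mZ := hZ.hasMoments
  unfold covForm
  fun_prop

theorem integral_covForm_divergence (hZ : IsCenteredGaussian Z K P) (hK : ∀ i, K i i = 1)
    (A : Polynomial ℝ) (s : Finset ι) :
    ∫ ω, covForm K A (divergence A).derivative s (Z · ω) ∂P =
      ∑ i ∈ s, ∑ j ∈ s, ∫ ω, (divergence A).eval (Z i ω) * (divergence A).eval (Z j ω) ∂P := by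
  have := hZ.isProbabilityMeasure
  have mZ := hZ.hasMoments
  simp only [covForm]
  rw [integral_finsetSum _ fun i _ => HasMoments.integrable (by fun_prop)]
  refine Finset.sum_congr rfl fun i _ => ?_
  rw [integral_finsetSum _ fun j _ => HasMoments.integrable (by fun_prop)]
  simp only [integral_const_mul, hZ.integral_divergence_mul_eval (hK i)]

theorem isSteinKernel_covForm (hZ : IsCenteredGaussian Z K P) (hK : ∀ i, K i i = 1)
    (A : Polynomial ℝ) (s : Finset ι) :
    IsSteinKernel (fun ω => ∑ i ∈ s, (divergence A).eval (Z i ω))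
      (fun ω => covForm K A (divergence A).derivative s (Z · ω)) P := by
  have := hZ.isProbabilityMeasure
  have mZ := hZ.hasMoments
  have hmeas := hZ.measurable
  rintro φ φ' hφ hφ' ⟨C, hC⟩ ⟨C', hC'⟩
  have φ_meas : Measurable φ :=
    (continuous_iff_continuousAt.2 fun x => (hφ x).continuousAt).measurable
  have φ'_meas : Measurable φ' := hφ'.measurable
  set u : (ι → ℝ) → ℝ := fun x => ∑ j ∈ s, (divergence A).eval (x j) with hu
  set u' : ι → (ι → ℝ) → ℝ := fun i x =>
    ∑ j ∈ s, K i j * (divergence A).derivative.eval (x j) with hu'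
  have u_meas : Measurable u := by fun_prop
  have mφ : HasMoments (fun ω => φ (u (Z · ω))) P :=
    .of_bounded (by fun_prop) fun ω => hC _
  have mφ' : HasMoments (fun ω => φ' (u (Z · ω))) P :=
    .of_bounded (by fun_prop) fun ω => hC' _
  have mu' (i : ι) : HasMoments (fun ω => u' i (Z · ω)) P := by
    simp only [hu']
    fun_prop
  calc ∫ ω, u (Z · ω) * φ (u (Z · ω)) ∂P
      = ∑ i ∈ s, ∫ ω, (divergence A).eval (Z i ω) * φ (u (Z · ω)) ∂P := by
        rw [← integral_finsetSum _ fun i _ =>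
          (((mZ i).polynomial_eval _).mul mφ).integrable]
        simp only [← Finset.sum_mul, hu]
    _ = ∑ i ∈ s, ∫ ω, A.eval (Z i ω) * (φ' (u (Z · ω)) * u' i (Z · ω)) ∂P :=
        Finset.sum_congr rfl fun i _ => hZ.integral_divergence_mul (hK i) A (by fun_prop)
          (by fun_prop)
          (fun x => hasLineDerivAt_comp_sum_polynomial_eval hφ (divergence A) s x (K i))
          mφ (mφ'.mul (mu' i))
    _ = ∫ ω, covForm K A (divergence A).derivative s (Z · ω) * φ' (u (Z · ω)) ∂P := by
        rw [← integral_finsetSum _ fun i _ =>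
          (((mZ i).polynomial_eval _).mul (mφ'.mul (mu' i))).integrable]
        refine integral_congr_ae (Eventually.of_forall fun ω => ?_)
        simp only [covForm, hu', Finset.sum_mul, Finset.mul_sum]
        exact Finset.sum_congr rfl fun i _ => Finset.sum_congr rfl fun j _ => by ring

end IsCenteredGaussian

/-! ### Mixed moments of a Gaussian family -/

section MixedMoments

open Multiset

theorem abs_sum_map_add_map_le_factorial_mul {α β : Type*} {s : Multiset α} {t : Multiset β}
    {f : α → ℝ} {g : β → ℝ} {c : ℝ} (hc : 0 ≤ c)
    (hf : ∀ i ∈ s, |f i| ≤ (card s + card t - 1).factorial * c)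
    (hg : ∀ j ∈ t, |g j| ≤ (card s + card t - 1).factorial * c) :
    |(s.map f + t.map g).sum| ≤ (card s + card t + 1).factorial * c := by
  set n := card s + card t
  have hsum : |(s.map f + t.map g).sum| ≤ n * ((n - 1).factorial * c) := by
    refine abs_sum_le_sum_abs.trans ?_
    refine (sum_le_card_nsmul _ ((n - 1).factorial * c) ?_).trans_eq ?_
    · simpa [or_imp, forall_and] using ⟨hf, hg⟩
    · simp [n]
  have hfactorial : n * (n - 1).factorial ≤ (n + 1).factorial := by
    rcases n with _ | n
    · simp
    · rw [Nat.add_sub_cancel, ← Nat.factorial_succ]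
      exact Nat.factorial_le (Nat.le_succ _)
  calc |(s.map f + t.map g).sum| ≤ (n * (n - 1).factorial : ℕ) * c := by
        rwa [Nat.cast_mul, mul_assoc]
    _ ≤ (n + 1).factorial * c := by gcongr

variable {Ω ι : Type*} {mΩ : MeasurableSpace Ω} {P : Measure Ω} {Z : ι → Ω → ℝ} {K : ι → ι → ℝ}

/-- The mixed moment `E[∏_{i ∈ s} Z i]`, indices being counted with multiplicity. -/
def mixedMoment (Z : ι → Ω → ℝ) (P : Measure Ω) (s : Multiset ι) : ℝ :=
  ∫ ω, (s.map (Z · ω)).prod ∂P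

theorem mixedMoment_zero [IsProbabilityMeasure P] (Z : ι → Ω → ℝ) : mixedMoment Z P 0 = 1 := by
  simp [mixedMoment]

theorem IsCenteredGaussian.abs_cov_mul_le (hZ : IsCenteredGaussian Z K P) (hK : ∀ i, K i i = 1)
    (i j : ι) {x b : ℝ} (hx : |x| ≤ b) : |K i j * x| ≤ b := by
  rw [abs_mul]
  exact (mul_le_of_le_one_left (abs_nonneg x) (hZ.abs_cov_le_one hK i j)).trans hx

theorem IsCenteredGaussian.mixedMoment_cons [DecidableEq ι] (hZ : IsCenteredGaussian Z K P)
    (i : ι) (s : Multiset ι) :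
    mixedMoment Z P (i ::ₘ s) = (s.map fun j => K i j * mixedMoment Z P (s.erase j)).sum := by
  have := hZ.isProbabilityMeasure
  have mprod (t : Multiset ι) : HasMoments (fun ω => (t.map (Z · ω)).prod) P :=
    .multiset_prod hZ.hasMoments t
  have mterm (j : ι) : HasMoments (fun ω => (s.count j : ℝ) *
      (K i j * ((s.erase j).map (Z · ω)).prod)) P := by fun_prop
  have prod_meas (t : Multiset ι) : Measurable fun x : ι → ℝ => (t.map x).prod := by
    simp only [Finset.prod_multiset_map_count]
    fun_prop
  have hd := fun x => hasLineDerivAt_multiset_prod s x (K i)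
  simp only [Finset.sum_multiset_map_count, nsmul_eq_mul] at hd ⊢
  simp only [mixedMoment, map_cons, prod_cons]
  rw [hZ.integral_mul_eq_integral_lineDeriv i (prod_meas s) (by fun_prop) hd
    (mprod s).integrable ((hZ.hasMoments i).mul (mprod s)).integrable
    (HasMoments.sum mterm).integrable,
    integral_finsetSum _ fun j _ => (mterm j).integrable]
  simp only [integral_const_mul]

theorem IsCenteredGaussian.mixedMoment_cons_add [DecidableEq ι] (hZ : IsCenteredGaussian Z K P)
    (i : ι) (s t : Multiset ι) :
    mixedMoment Z P (i ::ₘ s + t) = ((s.map fun j => K i j * mixedMoment Z P (s.erase j + t)) +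
      t.map fun j => K i j * mixedMoment Z P (s + t.erase j)).sum := by
  rw [cons_add, hZ.mixedMoment_cons, Multiset.map_add, sum_add, sum_add]
  congr 2
  · exact map_congr rfl fun j hj => by rw [erase_add_left_pos t hj]
  · exact map_congr rfl fun j hj => by rw [erase_add_right_pos s hj]

theorem IsCenteredGaussian.abs_mixedMoment_le_factorial (hZ : IsCenteredGaussian Z K P)
    (hK : ∀ i, K i i = 1) {n : ℕ} {s : Multiset ι} (hs : card s = n) :
    |mixedMoment Z P s| ≤ n.factorial := by
  classical
  have := hZ.isProbabilityMeasure
  induction n using Nat.strong_induction_on generalizing s with | h n ih =>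
  subst hs
  induction s using Multiset.induction_on with
  | empty => simp [mixedMoment_zero]
  | cons i s _ =>
    have h := abs_sum_map_add_map_le_factorial_mul zero_le_one (s := s) (t := (0 : Multiset ι))
      (f := fun j => K i j * mixedMoment Z P (s.erase j)) (g := 0) (fun j hj => ?_) (by simp)
    · simpa [hZ.mixedMoment_cons] using h
    · simpa using hZ.abs_cov_mul_le hK i j (ih (card s - 1) (by rw [card_cons]; omega)
        (card_erase_of_mem hj))

/-- As `s` has an odd number of elements, one of them is paired with an element of `t`. -/
theorem IsCenteredGaussian.abs_mixedMoment_add_le_of_odd (hZ : IsCenteredGaussian Z K P)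
    (hK : ∀ i, K i i = 1) {n : ℕ} (hn : Odd n) {s t : Multiset ι} (hs : card s = n) {δ : ℝ}
    (hδ : 0 ≤ δ) (hst : ∀ i ∈ s, ∀ j ∈ t, |K i j| ≤ δ) :
    |mixedMoment Z P (s + t)| ≤ (n + card t).factorial * δ := by
  classical
  induction n using Nat.strong_induction_on generalizing s with | h n ih =>
  subst hs
  obtain ⟨i, hi⟩ := card_pos_iff_exists_mem.1 hn.pos
  obtain ⟨s, rfl⟩ := exists_cons_of_mem hi
  obtain ⟨hit, hst⟩ := forall_mem_cons.1 hst
  rw [hZ.mixedMoment_cons_add, card_cons, add_right_comm]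
  refine abs_sum_map_add_map_le_factorial_mul hδ (fun j hj => ?_) fun j hj => ?_
  · obtain ⟨s, rfl⟩ := exists_cons_of_mem hj
    simp only [card_cons, Nat.odd_add_one, not_not] at hn ih ⊢
    rw [erase_cons_head, Nat.add_right_comm, Nat.add_sub_cancel]
    exact hZ.abs_cov_mul_le hK i j
      (ih (card s) (by omega) hn rfl fun i hi => hst i (mem_cons_of_mem hi))
  · rw [abs_mul, mul_comm]
    refine mul_le_mul (hZ.abs_mixedMoment_le_factorial hK ?_) (hit j hj) (abs_nonneg _) (by simp)
    rw [card_add, card_erase_of_mem hj, Nat.pred_eq_sub_one,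
      Nat.add_sub_assoc (card_pos_iff_exists_mem.2 ⟨j, hj⟩)]

/-- Pairings between `s` and `t` come in even number, so that either none occurs, which yields the
product of the moments, or there are two of them. -/
theorem IsCenteredGaussian.abs_mixedMoment_add_sub_mul_le_of_even (hZ : IsCenteredGaussian Z K P)
    (hK : ∀ i, K i i = 1) {n : ℕ} (hn : Even n) {s t : Multiset ι} (hs : card s = n) {δ : ℝ}
    (hδ : 0 ≤ δ) (hst : ∀ i ∈ s, ∀ j ∈ t, |K i j| ≤ δ) :
    |mixedMoment Z P (s + t) - mixedMoment Z P s * mixedMoment Z P t| ≤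
      (n + card t).factorial * δ ^ 2 := by
  classical
  have := hZ.isProbabilityMeasure
  induction n using Nat.strong_induction_on generalizing s with | h n ih =>
  subst hs
  rcases s.empty_or_exists_mem with rfl | ⟨i, hi⟩
  · simp only [zero_add, mixedMoment_zero, one_mul, sub_self, abs_zero]
    positivity
  obtain ⟨s, rfl⟩ := exists_cons_of_mem hi
  obtain ⟨hit, hst⟩ := forall_mem_cons.1 hst
  have difference : mixedMoment Z P (i ::ₘ s + t) - mixedMoment Z P (i ::ₘ s) * mixedMoment Z P t =
      ((s.map fun j => K i j * (mixedMoment Z P (s.erase j + t) -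
        mixedMoment Z P (s.erase j) * mixedMoment Z P t)) +
        t.map fun j => K i j * mixedMoment Z P (s + t.erase j)).sum := by
    simp only [hZ.mixedMoment_cons_add, hZ.mixedMoment_cons, sum_add, mul_sub, sum_map_sub,
      ← mul_assoc, sum_map_mul_right]
    ring
  rw [difference, card_cons, add_right_comm]
  refine abs_sum_map_add_map_le_factorial_mul (sq_nonneg δ) (fun j hj => ?_) fun j hj => ?_
  · obtain ⟨s, rfl⟩ := exists_cons_of_mem hj
    simp only [card_cons, Nat.even_add_one, not_not] at hn ih ⊢
    rw [erase_cons_head, Nat.add_right_comm, Nat.add_sub_cancel]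
    exact hZ.abs_cov_mul_le hK i j
      (ih (card s) (by omega) hn rfl fun i hi => hst i (mem_cons_of_mem hi))
  · rw [card_cons, Nat.even_add_one, Nat.not_even_iff_odd] at hn
    have hmoment := hZ.abs_mixedMoment_add_le_of_odd hK hn rfl hδ (t := t.erase j)
      fun i hi j hj => hst i hi j (mem_of_mem_erase hj)
    rw [abs_mul, mul_comm, sq, ← mul_assoc]
    refine mul_le_mul (hmoment.trans_eq ?_) (hit j hj) (abs_nonneg _) (by positivity)
    rw [card_erase_of_mem hj, Nat.pred_eq_sub_one,
      Nat.add_sub_assoc (card_pos_iff_exists_mem.2 ⟨j, hj⟩)]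

end MixedMoments

/-! ### Covariances of polynomial functionals -/

theorem polynomial_eval_mul_eval_eq_sum (A B : Polynomial ℝ) (x y : ℝ) :
    A.eval x * B.eval y = ∑ p ∈ A.support ×ˢ B.support, A.coeff p.1 * B.coeff p.2 *
      (x ^ p.1 * y ^ p.2) := by
  simp only [Polynomial.eval_eq_sum, Polynomial.sum_def, Finset.sum_mul_sum, Finset.sum_product,
    mul_mul_mul_comm]

theorem variance_sum_sum {Ω ι : Type*} {mΩ : MeasurableSpace Ω} {P : Measure Ω}
    [IsFiniteMeasure P] {s : Finset ι} {X : ι → ι → Ω → ℝ} (hX : ∀ i j, MemLp (X i j) 2 P) :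
    Var[fun ω => ∑ i ∈ s, ∑ j ∈ s, X i j ω; P] =
      ∑ i ∈ s, ∑ j ∈ s, ∑ k ∈ s, ∑ l ∈ s, cov[X i j, X k l; P] := by
  rw [variance_fun_sum' fun i _ => memLp_finsetSum s fun j _ => hX i j]
  refine Finset.sum_congr rfl fun i _ => ?_
  rw [Finset.sum_comm]
  exact Finset.sum_congr rfl fun k _ =>
    covariance_fun_sum_fun_sum' (fun j _ => hX i j) fun l _ => hX k l

theorem sum_sum_mul_add_le {ι : Type*} {s : Finset ι} {a : ι → ι → ℝ} {g : ι → ℝ} {S : ℝ}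
    (ha : ∀ i j, a i j = a j i) (hS : ∀ i ∈ s, ∑ j ∈ s, a i j ≤ S) (hg : ∀ i, 0 ≤ g i) :
    ∑ i ∈ s, ∑ j ∈ s, a i j * (g i + g j) ≤ 2 * S * ∑ i ∈ s, g i :=
  calc ∑ i ∈ s, ∑ j ∈ s, a i j * (g i + g j)
      = 2 * ∑ i ∈ s, (∑ j ∈ s, a i j) * g i := by
        simp only [mul_add, Finset.sum_add_distrib, Finset.sum_mul, two_mul]
        rw [Finset.sum_comm (f := fun i j => a i j * g j)]
        simp only [ha]
    _ ≤ 2 * S * ∑ i ∈ s, g i := by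
        rw [mul_assoc, Finset.mul_sum s _ S]
        gcongr with i hi
        · exact hg i
        · exact hS i hi

theorem sum_mul_mul_sum_add_le {ι : Type*} {s : Finset ι} {a b : ι → ι → ℝ} {S : ℝ}
    (ha : ∀ i j, a i j = a j i) (ha0 : ∀ i j, 0 ≤ a i j) (hS : ∀ i ∈ s, ∑ j ∈ s, a i j ≤ S)
    (hS0 : 0 ≤ S) (hb0 : ∀ i j, 0 ≤ b i j) :
    ∑ i ∈ s, ∑ j ∈ s, ∑ k ∈ s, ∑ l ∈ s,
        a i j * (a k l * ((b i k + b j k) + (b i l + b j l))) ≤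
      4 * S ^ 2 * ∑ i ∈ s, ∑ j ∈ s, b i j := by
  have hinner (i j : ι) : ∑ k ∈ s, ∑ l ∈ s, a k l * ((b i k + b j k) + (b i l + b j l)) ≤
      2 * S * (∑ k ∈ s, b i k + ∑ k ∈ s, b j k) := by
    rw [← Finset.sum_add_distrib]
    exact sum_sum_mul_add_le ha hS fun k => add_nonneg (hb0 i k) (hb0 j k)
  have houter := sum_sum_mul_add_le (g := fun i => ∑ k ∈ s, b i k) ha hS
    fun i => Finset.sum_nonneg fun k _ => hb0 i k
  calc _ ≤ ∑ i ∈ s, ∑ j ∈ s, a i j * (2 * S * (∑ k ∈ s, b i k + ∑ k ∈ s, b j k)) := by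
        gcongr with i _ j _
        simp only [← Finset.mul_sum]
        exact mul_le_mul_of_nonneg_left (hinner i j) (ha0 i j)
    _ = 2 * S * ∑ i ∈ s, ∑ j ∈ s, a i j * (∑ k ∈ s, b i k + ∑ k ∈ s, b j k) := by
        simp only [Finset.mul_sum, mul_left_comm]
    _ ≤ 2 * S * (2 * S * ∑ i ∈ s, ∑ j ∈ s, b i j) := by gcongr
    _ = 4 * S ^ 2 * ∑ i ∈ s, ∑ j ∈ s, b i j := by ring

namespace IsCenteredGaussian

variable {Ω ι : Type*} {mΩ : MeasurableSpace Ω} {P : Measure Ω} {Z : ι → Ω → ℝ} {K : ι → ι → ℝ}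

theorem abs_cov_prod_le (hZ : IsCenteredGaussian Z K P) (hK : ∀ i, K i i = 1) {s t : Multiset ι}
    (hs : Even s.card) {δ : ℝ} (hδ : 0 ≤ δ) (hst : ∀ i ∈ s, ∀ j ∈ t, |K i j| ≤ δ) :
    |cov[fun ω => (s.map (Z · ω)).prod, fun ω => (t.map (Z · ω)).prod; P]| ≤
      (s.card + t.card).factorial * δ ^ 2 := by
  classical
  have := hZ.isProbabilityMeasure
  have hmoments (s : Multiset ι) : HasMoments (fun ω => (s.map (Z · ω)).prod) P :=
    .multiset_prod hZ.hasMoments s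
  rw [covariance_eq_sub (hmoments s).memLp_two (hmoments t).memLp_two]
  simpa [mixedMoment] using hZ.abs_mixedMoment_add_sub_mul_le_of_even hK hs rfl hδ hst

theorem abs_cov_pow_mul_pow_le (hZ : IsCenteredGaussian Z K P) (hK : ∀ i, K i i = 1) {a b : ℕ}
    (hab : Even (a + b)) (c d : ℕ) (i j k l : ι) :
    |cov[fun ω => Z i ω ^ a * Z j ω ^ b, fun ω => Z k ω ^ c * Z l ω ^ d; P]| ≤
      (a + b + (c + d)).factorial * (K i k ^ 2 + K i l ^ 2 + K j k ^ 2 + K j l ^ 2) := by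
  set v := K i k ^ 2 + K i l ^ 2 + K j k ^ 2 + K j l ^ 2
  have hv : 0 ≤ v := by positivity
  have h := hZ.abs_cov_prod_le hK (s := .replicate a i + .replicate b j) (by simpa using hab)
    (t := .replicate c k + .replicate d l) (Real.sqrt_nonneg v) fun x hx y hy => ?_
  · simpa [Real.sq_sqrt hv] using h
  · apply Real.abs_le_sqrt
    obtain hx | hx := Multiset.mem_add.1 hx <;> obtain hy | hy := Multiset.mem_add.1 hy <;>
      rw [Multiset.eq_of_mem_replicate hx, Multiset.eq_of_mem_replicate hy] <;>
      linarith [sq_nonneg (K i k), sq_nonneg (K i l), sq_nonneg (K j k), sq_nonneg (K j l)]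

theorem exists_abs_cov_eval_mul_eval_le (hZ : IsCenteredGaussian Z K P) (hK : ∀ i, K i i = 1)
    {A B : Polynomial ℝ} (hAB : ∀ a ∈ A.support, ∀ b ∈ B.support, Even (a + b)) :
    ∃ C, 0 ≤ C ∧ ∀ i j k l, |cov[fun ω => A.eval (Z i ω) * B.eval (Z j ω),
      fun ω => A.eval (Z k ω) * B.eval (Z l ω); P]| ≤
        C * (K i k ^ 2 + K i l ^ 2 + K j k ^ 2 + K j l ^ 2) := by
  have := hZ.isProbabilityMeasure
  have mZ := hZ.hasMoments
  set c : ℕ × ℕ → ℝ := fun p => A.coeff p.1 * B.coeff p.2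
  set I := A.support ×ˢ B.support
  refine ⟨∑ p ∈ I, ∑ q ∈ I, |c q| * (|c p| * (p.1 + p.2 + (q.1 + q.2)).factorial),
    by positivity, fun i j k l => ?_⟩
  have hterm (i j : ι) (p : ℕ × ℕ) : MemLp (fun ω => c p * (Z i ω ^ p.1 * Z j ω ^ p.2)) 2 P :=
    HasMoments.memLp_two (by fun_prop)
  simp only [polynomial_eval_mul_eval_eq_sum A B]
  rw [covariance_fun_sum_fun_sum' (fun p _ => hterm i j p) fun q _ => hterm k l q]
  simp only [covariance_const_mul_left, covariance_const_mul_right, Finset.sum_mul]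
  refine (Finset.abs_sum_le_sum_abs _ _).trans (Finset.sum_le_sum fun p hp => ?_)
  refine (Finset.abs_sum_le_sum_abs _ _).trans (Finset.sum_le_sum fun q _ => ?_)
  obtain ⟨ha, hb⟩ := Finset.mem_product.1 hp
  rw [abs_mul (c q), abs_mul (c p), mul_assoc, mul_assoc]
  gcongr
  exact hZ.abs_cov_pow_mul_pow_le hK (hAB _ ha _ hb) q.1 q.2 i j k l

theorem exists_variance_covForm_le (hZ : IsCenteredGaussian Z K P) (hK : ∀ i, K i i = 1)
    {A B : Polynomial ℝ} (hAB : ∀ a ∈ A.support, ∀ b ∈ B.support, Even (a + b)) :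
    ∃ C, ∀ (s : Finset ι) (S : ℝ), 0 ≤ S → (∀ i ∈ s, ∑ j ∈ s, |K i j| ≤ S) →
      Var[fun ω => covForm K A B s (Z · ω); P] ≤ C * (S ^ 2 * ∑ i ∈ s, ∑ j ∈ s, K i j ^ 2) := by
  have := hZ.isProbabilityMeasure
  have mZ := hZ.hasMoments
  obtain ⟨C, hC0, hC⟩ := hZ.exists_abs_cov_eval_mul_eval_le hK hAB
  refine ⟨C * 4, fun s S hS0 hS => ?_⟩
  set X : ι → ι → Ω → ℝ := fun i j ω => K i j * (A.eval (Z i ω) * B.eval (Z j ω))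
  have hX (i j : ι) : MemLp (X i j) 2 P := HasMoments.memLp_two (by fun_prop)
  have hcov (i j k l : ι) : cov[X i j, X k l; P] ≤
      C * (|K i j| * (|K k l| * ((K i k ^ 2 + K j k ^ 2) + (K i l ^ 2 + K j l ^ 2)))) := by
    rw [covariance_const_mul_left, covariance_const_mul_right]
    calc _ ≤ |K i j| * (|K k l| * (C * (K i k ^ 2 + K i l ^ 2 + K j k ^ 2 + K j l ^ 2))) := by
          refine (le_abs_self _).trans ?_
          rw [abs_mul, abs_mul]
          gcongr
          exact hC i j k l
      _ = _ := by ring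
  calc Var[fun ω => covForm K A B s (Z · ω); P]
      = ∑ i ∈ s, ∑ j ∈ s, ∑ k ∈ s, ∑ l ∈ s, cov[X i j, X k l; P] := variance_sum_sum hX
    _ ≤ ∑ i ∈ s, ∑ j ∈ s, ∑ k ∈ s, ∑ l ∈ s,
        C * (|K i j| * (|K k l| * ((K i k ^ 2 + K j k ^ 2) + (K i l ^ 2 + K j l ^ 2)))) := by
        gcongr with i _ j _ k _ l _
        exact hcov i j k l
    _ ≤ C * (4 * S ^ 2 * ∑ i ∈ s, ∑ j ∈ s, K i j ^ 2) := by
        simp only [← Finset.mul_sum _ _ C]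
        gcongr
        exact sum_mul_mul_sum_add_le (b := fun i j => K i j ^ 2)
          (fun i j => by rw [hZ.cov_symm i j])
          (fun i j => abs_nonneg _) hS hS0 fun i j => sq_nonneg _
    _ = C * 4 * (S ^ 2 * ∑ i ∈ s, ∑ j ∈ s, K i j ^ 2) := by ring

end IsCenteredGaussian

/-! ### Square-summable sequences -/

theorem sq_sum_abs_le {α : Type*} [DecidableEq α] (ρ : α → ℝ) (I F : Finset α) :
    (∑ m ∈ I, |ρ m|) ^ 2 ≤ 2 * (∑ m ∈ F, |ρ m|) ^ 2 + 2 * (I.card * ∑ m ∈ I \ F, ρ m ^ 2) := by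
  have hinter : (∑ m ∈ I ∩ F, |ρ m|) ^ 2 ≤ (∑ m ∈ F, |ρ m|) ^ 2 := by
    gcongr
    exact Finset.inter_subset_right
  have hsdiff : (∑ m ∈ I \ F, |ρ m|) ^ 2 ≤ I.card * ∑ m ∈ I \ F, ρ m ^ 2 := by
    refine sq_sum_le_card_mul_sum_sq.trans ?_
    simp only [sq_abs]
    gcongr
    exact Finset.sdiff_subset
  rw [← Finset.sum_inter_add_sum_sdiff I F fun m => |ρ m|]
  linarith [add_sq_le (a := ∑ m ∈ I ∩ F, |ρ m|) (b := ∑ m ∈ I \ F, |ρ m|)]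

theorem tendsto_sq_sum_abs_div {α : Type*} {ρ : α → ℝ} (hρ : Summable fun m => ρ m ^ 2)
    {I : ℕ → Finset α} {C : ℝ} (hI : ∀ n, ((I n).card : ℝ) ≤ C * n) :
    Tendsto (fun n : ℕ => (∑ m ∈ I n, |ρ m|) ^ 2 / n) atTop (nhds 0) := by
  classical
  have hC : 0 ≤ C := by simpa using (Nat.cast_nonneg _).trans (hI 1)
  refine tendsto_order.2 ⟨fun a ha => Eventually.of_forall fun n => ha.trans_le (by positivity),
    fun ε hε => ?_⟩
  set η := ε / (2 * (2 * C + 1)) with hη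
  obtain ⟨F, hF⟩ := summable_iff_vanishing_norm.1 hρ η (by positivity)
  have tail_le (n : ℕ) : ∑ m ∈ I n \ F, ρ m ^ 2 ≤ η :=
    (le_abs_self _).trans (hF _ Finset.sdiff_disjoint).le
  have hhead : ∀ᶠ n : ℕ in atTop, 2 * (∑ m ∈ F, |ρ m|) ^ 2 / n < ε / 2 :=
    (tendsto_const_div_atTop_nhds_zero_nat _).eventually_lt_const (half_pos hε)
  filter_upwards [hhead, eventually_gt_atTop 0] with n hn hn0
  calc (∑ m ∈ I n, |ρ m|) ^ 2 / n
      ≤ (2 * (∑ m ∈ F, |ρ m|) ^ 2 + 2 * (C * n * η)) / n := by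
        gcongr
        refine (sq_sum_abs_le ρ (I n) F).trans ?_
        gcongr
        · exact hI n
        · exact tail_le n
    _ = 2 * (∑ m ∈ F, |ρ m|) ^ 2 / n + 2 * C * η := by field_simp
    _ < ε / 2 + ε / 2 := by
        refine add_lt_add hn ?_
        rw [hη, mul_div_assoc', div_lt_div_iff₀ (by positivity) two_pos]
        nlinarith
    _ = ε := add_halves ε

theorem sum_range_sub_le_sum_Ioo {g : ℤ → ℝ} (hg : ∀ m, 0 ≤ g m) {n i : ℕ} (hi : i < n) :
    ∑ j ∈ Finset.range n, g (j - i) ≤ ∑ m ∈ Finset.Ioo (-n : ℤ) n, g m := by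
  have hinj : Set.InjOn (fun j : ℕ => (j : ℤ) - i) (Finset.range n) := fun a _ b _ h => by
    simpa using h
  rw [← Finset.sum_image (f := g) hinj]
  refine Finset.sum_le_sum_of_subset_of_nonneg (Finset.image_subset_iff.2 fun j hj => ?_)
    fun m _ _ => hg m
  rw [Finset.mem_range] at hj
  rw [Finset.mem_Ioo]
  omega

theorem sum_range_sub_add_sum_range_sub (κ : ℤ → ℝ) (n : ℕ) :
    ∑ i ∈ Finset.range n, κ (n - i) + ∑ j ∈ Finset.range n, κ (j - n) + κ 0 =
      ∑ m ∈ Finset.Icc (-n : ℤ) n, κ m := by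
  induction n with
  | zero => simp
  | succ n ih =>
    push_cast
    rw [Finset.sum_Icc_succ_eq_add_endpoints, ← ih, Finset.sum_range_succ', Finset.sum_range_succ']
    simp only [Nat.cast_add, Nat.cast_one, add_sub_add_right_eq_sub, Nat.cast_zero, sub_zero,
      zero_sub]
    ring

theorem sum_range_sum_range_sub_eq (κ : ℤ → ℝ) (n : ℕ) :
    ∑ i ∈ Finset.range n, ∑ j ∈ Finset.range n, κ (j - i) =
      ∑ k ∈ Finset.range n, ∑ m ∈ Finset.Icc (-k : ℤ) k, κ m := by
  induction n with
  | zero => simp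
  | succ n ih =>
    rw [Finset.sum_range_succ (fun k : ℕ => ∑ m ∈ Finset.Icc (-k : ℤ) k, κ m), ← ih,
      ← sum_range_sub_add_sum_range_sub]
    simp only [Finset.sum_range_succ, Finset.sum_add_distrib, sub_self]
    ring

/-- The double sum is a sum of symmetric partial sums, so that this is a Cesàro limit. -/
theorem tendsto_average_sum_sub {κ : ℤ → ℝ} (hκ : Summable κ) :
    Tendsto (fun n : ℕ => (n : ℝ)⁻¹ * ∑ i ∈ Finset.range n, ∑ j ∈ Finset.range n, κ (j - i))
      atTop (nhds (∑' m, κ m)) := by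
  have hIcc : Tendsto (fun n : ℕ => ∑ m ∈ Finset.Icc (-n : ℤ) n, κ m) atTop
      (nhds (∑' m, κ m)) := by
    have h := hκ.hasSum.mono_left (SummationFilter.symmetricIcc ℤ).le_atTop
    rwa [SummationFilter.symmetricIcc_eq_map_Icc_nat, tendsto_map'_iff] at h
  simpa only [sum_range_sum_range_sub_eq] using hIcc.cesaro

/-! ### Convergence in total variation of stationary sums -/

theorem odd_of_mem_support_derivative_divergence {H : Polynomial ℝ}
    (hH : ∀ a ∈ H.support, Odd a) {a : ℕ} (ha : a ∈ (divergence H).derivative.support) :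
    Odd a := by
  simp only [Polynomial.mem_support_iff] at hH ha
  by_contra hodd
  have coeff_eq : H.coeff a = 0 := by_contra fun h => hodd (hH a h)
  have coeff_add_two : H.coeff (a + 2) = 0 :=
    by_contra fun h => hodd (by simpa [Nat.odd_add] using hH (a + 2) h)
  rw [Polynomial.coeff_derivative, divergence_apply, Polynomial.coeff_sub, Polynomial.coeff_X_mul,
    Polynomial.coeff_derivative, coeff_eq, coeff_add_two] at ha
  simp at ha

section StationarySums

variable {Ω : Type*} {mΩ : MeasurableSpace Ω} {P : Measure Ω} {Z : ℕ → Ω → ℝ} {ρ : ℤ → ℝ}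

namespace IsCenteredGaussian

theorem tendsto_variance_covForm (hZ : IsCenteredGaussian Z (fun i j => ρ (j - i)) P)
    (hρ0 : ρ 0 = 1) (hρ : Summable fun m => ρ m ^ 2) {A B : Polynomial ℝ}
    (hAB : ∀ a ∈ A.support, ∀ b ∈ B.support, Even (a + b)) :
    Tendsto (fun n : ℕ => Var[fun ω => (√n)⁻¹ ^ 2 *
      covForm (fun i j : ℕ => ρ (j - i)) A B (Finset.range n) (Z · ω); P]) atTop (nhds 0) := by
  obtain ⟨C, hC⟩ := hZ.exists_variance_covForm_le (by simp [hρ0]) hAB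
  set S : ℕ → ℝ := fun n => ∑ m ∈ Finset.Ioo (-n : ℤ) n, |ρ m|
  have hcard (n : ℕ) : ((Finset.Ioo (-n : ℤ) n).card : ℝ) ≤ 2 * n := by
    rw [Int.card_Ioo]
    norm_cast
    omega
  have hlim : Tendsto (fun n : ℕ => |C| * ((∑' m, ρ m ^ 2) * (S n ^ 2 / n))) atTop (nhds 0) := by
    simpa using ((tendsto_sq_sum_abs_div hρ hcard).const_mul (∑' m, ρ m ^ 2)).const_mul |C|
  refine squeeze_zero (fun n => variance_nonneg _ _) (fun n => ?_) hlim
  have sq_sum_le : ∑ i ∈ Finset.range n, ∑ j ∈ Finset.range n, ρ (j - i) ^ 2 ≤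
      n * ∑' m, ρ m ^ 2 := by
    rw [← nsmul_eq_mul]
    simpa using Finset.sum_le_card_nsmul (Finset.range n)
      (fun i : ℕ => ∑ j ∈ Finset.range n, ρ (j - i) ^ 2) _ fun i hi =>
      (sum_range_sub_le_sum_Ioo (fun m => sq_nonneg (ρ m)) (Finset.mem_range.1 hi)).trans
        (hρ.sum_le_tsum _ fun m _ => sq_nonneg (ρ m))
  rw [variance_const_mul]
  calc _ ≤ ((√n)⁻¹ ^ 2) ^ 2 * (|C| * (S n ^ 2 * (n * ∑' m, ρ m ^ 2))) := by
        gcongr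
        refine (hC _ (S n) (Finset.sum_nonneg fun m _ => abs_nonneg _) fun i hi =>
          sum_range_sub_le_sum_Ioo (fun m => abs_nonneg (ρ m)) (Finset.mem_range.1 hi)).trans ?_
        gcongr
        exact le_abs_self C
    _ = |C| * ((∑' m, ρ m ^ 2) * (S n ^ 2 / n)) := by
        rcases n.eq_zero_or_pos with rfl | hn
        · simp
        · rw [inv_pow, Real.sq_sqrt n.cast_nonneg]
          field_simp

theorem tendsto_integral_covForm_divergence
    (hZ : IsCenteredGaussian Z (fun i j => ρ (j - i)) P) (hρ0 : ρ 0 = 1) {H : Polynomial ℝ}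
    {κ : ℤ → ℝ} (hκ : Summable κ)
    (hHκ : ∀ i j, ∫ ω, (divergence H).eval (Z i ω) * (divergence H).eval (Z j ω) ∂P = κ (j - i)) :
    Tendsto (fun n : ℕ => ∫ ω, (√n)⁻¹ ^ 2 * covForm (fun i j : ℕ => ρ (j - i)) H
      (divergence H).derivative (Finset.range n) (Z · ω) ∂P) atTop (nhds (∑' m, κ m)) := by
  refine (tendsto_average_sum_sub hκ).congr fun n => ?_
  rw [integral_const_mul, hZ.integral_covForm_divergence (by simp [hρ0]), inv_pow,
    Real.sq_sqrt n.cast_nonneg]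
  simp only [hHκ]

/-- A Breuer-Major theorem in total variation: Stein's bound applies with a Stein kernel whose mean
tends to the limiting variance and whose variance tends to `0`. -/
theorem tendsto_dTV_gaussianReal (hZ : IsCenteredGaussian Z (fun i j => ρ (j - i)) P)
    (hρ0 : ρ 0 = 1) (hρ : Summable fun m => ρ m ^ 2) {H : Polynomial ℝ}
    (hH : ∀ a ∈ H.support, Odd a) {κ : ℤ → ℝ} (hκ : Summable κ)
    (hHκ : ∀ i j, ∫ ω, (divergence H).eval (Z i ω) * (divergence H).eval (Z j ω) ∂P = κ (j - i))
    (hpos : 0 < ∑' m, κ m) :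
    Tendsto (fun n : ℕ => dTV
      (P.map fun ω => (√n)⁻¹ * ∑ i ∈ Finset.range n, (divergence H).eval (Z i ω))
      (gaussianReal 0 (∑' m, κ m).toNNReal)) atTop (nhds 0) := by
  have := hZ.isProbabilityMeasure
  have mZ := hZ.hasMoments
  have hmeas := hZ.measurable
  set v := ∑' m, κ m
  set T : ℕ → Ω → ℝ := fun n ω => (√n)⁻¹ ^ 2 * covForm (fun i j : ℕ => ρ (j - i)) H
    (divergence H).derivative (Finset.range n) (Z · ω)
  have hvar : Tendsto (fun n => Var[T n; P]) atTop (nhds 0) :=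
    hZ.tendsto_variance_covForm hρ0 hρ fun a ha b hb =>
      (hH a ha).add_odd (odd_of_mem_support_derivative_divergence hH hb)
  have hmean : Tendsto (fun n => ∫ ω, T n ω ∂P) atTop (nhds v) :=
    hZ.tendsto_integral_covForm_divergence hρ0 hκ hHκ
  have hlim : Tendsto (fun n => 2 / v * (√(Var[T n; P]) + |∫ ω, T n ω ∂P - v|)) atTop
      (nhds 0) := by
    simpa using (hvar.sqrt.add (hmean.sub_const v).abs).const_mul (2 / v)
  refine squeeze_zero (fun n => dTV_nonneg _ _) (fun n => ?_) hlim
  have hkernel := (hZ.isSteinKernel_covForm (by simp [hρ0]) H (Finset.range n)).const_mul (√n)⁻¹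
  have hT : MemLp (T n) 2 P := ((HasMoments.const _).mul (hZ.hasMoments_covForm _ _ _)).memLp_two
  have hbound := hkernel.dTV_map_gaussianReal_le_sqrt_variance (by fun_prop)
    (HasMoments.integrable (by fun_prop)) hT (Real.toNNReal_pos.2 hpos).ne'
  rwa [Real.coe_toNNReal v hpos.le] at hbound

end IsCenteredGaussian

end StationarySums

/-! ### Even Hermite sums of a stationary Gaussian sequence -/

/-- The polynomial `∑_{k=1}^{q/2} d_{2k} He_{2k-1}`, whose Gaussian divergence is `f_q - d_0` on the
standardized scale. -/
def hermiteAntidivergence (d : ℕ → ℝ) (q : ℕ) : Polynomial ℝ :=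
  ∑ k ∈ Finset.Icc 1 (q / 2), d (2 * k) • hermiteR (2 * k - 1)

theorem odd_of_mem_support_hermiteAntidivergence {d : ℕ → ℝ} {q a : ℕ}
    (ha : a ∈ (hermiteAntidivergence d q).support) : Odd a := by
  contrapose! ha
  rw [Polynomial.notMem_support_iff, hermiteAntidivergence, Polynomial.finsetSum_coeff]
  refine Finset.sum_eq_zero fun k hk => ?_
  have odd_add : Odd (2 * k - 1 + a) := by grind
  rw [Polynomial.coeff_smul, coeff_hermiteR_of_odd_add odd_add, smul_zero]

theorem divergence_hermiteAntidivergence (d : ℕ → ℝ) (q : ℕ) :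
    divergence (hermiteAntidivergence d q) =
      ∑ k ∈ Finset.Icc 1 (q / 2), d (2 * k) • hermiteR (2 * k) := by
  rw [hermiteAntidivergence, map_sum]
  refine Finset.sum_congr rfl fun k hk => ?_
  have : 2 * k - 1 + 1 = 2 * k := by grind
  rw [map_smul, divergence_hermiteR, this]

theorem eval_divergence_hermiteAntidivergence (d : ℕ → ℝ) (q : ℕ) (x : ℝ) :
    (divergence (hermiteAntidivergence d q)).eval x =
      ∑ k ∈ Finset.Icc 1 (q / 2), d (2 * k) * (hermiteR (2 * k)).eval x := by
  simp [divergence_hermiteAntidivergence, Polynomial.eval_finsetSum]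

theorem fpoly_eq_add_eval_divergence (r0 : ℝ) (d : ℕ → ℝ) (q : ℕ) (x : ℝ) :
    fpoly r0 d q x = d 0 + (divergence (hermiteAntidivergence d q)).eval (x / √r0) := by
  rw [fpoly, Finset.range_eq_Ico, Finset.sum_eq_sum_Ico_succ_bot (by omega),
    eval_divergence_hermiteAntidivergence]
  simp [hermiteFun_eq_eval, hermiteR_zero, Finset.Ico_add_one_right_eq_Icc]

namespace IsCenteredGaussian

variable {Ω ι : Type*} {mΩ : MeasurableSpace Ω} {P : Measure Ω} {Z : ι → Ω → ℝ} {K : ι → ι → ℝ}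

theorem integral_divergence_hermiteAntidivergence (hZ : IsCenteredGaussian Z K P) {i : ι}
    (hi : K i i = 1) (d : ℕ → ℝ) (q : ℕ) :
    ∫ ω, (divergence (hermiteAntidivergence d q)).eval (Z i ω) ∂P = 0 := by
  simpa using hZ.integral_divergence_mul_eval hi (hermiteAntidivergence d q) 1 i

theorem integral_divergence_hermiteAntidivergence_mul (hZ : IsCenteredGaussian Z K P) {i j : ι}
    (hi : K i i = 1) (hj : K j j = 1) (d : ℕ → ℝ) (q : ℕ) :
    ∫ ω, (divergence (hermiteAntidivergence d q)).eval (Z i ω) *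
        (divergence (hermiteAntidivergence d q)).eval (Z j ω) ∂P =
      ∑ k ∈ Finset.Icc 1 (q / 2),
        d (2 * k) ^ 2 * (Nat.factorial (2 * k)) * K i j ^ (2 * k) := by
  have := hZ.isProbabilityMeasure
  have hint (k l : ℕ) : Integrable (fun ω => d (2 * k) * d (2 * l) *
      ((hermiteR (2 * k)).eval (Z i ω) * (hermiteR (2 * l)).eval (Z j ω))) P := by
    have hi' := hZ.hasMoments i
    have hj' := hZ.hasMoments j
    exact HasMoments.integrable (by fun_prop)
  simp only [eval_divergence_hermiteAntidivergence, Finset.sum_mul_sum, mul_mul_mul_comm (d _)]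
  rw [integral_finsetSum _ fun k _ => integrable_finsetSum _ fun l _ => hint k l]
  refine Finset.sum_congr rfl fun k hk => ?_
  rw [integral_finsetSum _ fun l _ => hint k l]
  simp only [integral_const_mul, hZ.integral_hermiteR_mul_hermiteR hi hj]
  rw [Finset.sum_eq_single_of_mem k hk fun l _ hl => by simp [hl.symm], if_pos rfl]
  ring

end IsCenteredGaussian

theorem summable_pow_of_abs_le_one {ι : Type*} {ρ : ι → ℝ} (hρ : Summable fun m => ρ m ^ 2)
    (hρ1 : ∀ m, |ρ m| ≤ 1) {k : ℕ} (hk : 2 ≤ k) : Summable fun m => ρ m ^ k := by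
  refine hρ.of_norm_bounded fun m => ?_
  rw [norm_pow, Real.norm_eq_abs, ← sq_abs (ρ m)]
  exact pow_le_pow_of_le_one (abs_nonneg _) (hρ1 m) hk

namespace IsCSG

variable {Z : ℤ → Ω → ℝ} {r : ℤ → ℝ}

theorem isGaussianProcess (hZ : IsCSG Z r) : IsGaussianProcess Z (ℙ : Measure Ω) where
  hasGaussianLaw I := by
    have hmeas : Measurable fun ω => I.restrict (Z · ω) := measurable_pi_lambda _ fun k => hZ.1 k
    refine ⟨isGaussian_of_map_eq_gaussianReal fun L => ?_⟩
    obtain ⟨v, hv⟩ := hZ.2.1 I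
      fun k => if h : k ∈ I then L (Pi.single (⟨k, h⟩ : I) 1) else 0
    refine ⟨0, v, ?_⟩
    rw [Measure.map_map (by fun_prop) hmeas, ← hv]
    congr 1
    ext ω
    have restrict_eq : I.restrict (Z · ω) = ∑ k : I, Z k ω • (Pi.single k (1 : ℝ) : I → ℝ) := by
      ext j
      simp [Finset.sum_apply, Pi.single_apply]
    rw [Function.comp_apply, restrict_eq, map_sum, ← Finset.sum_coe_sort I]
    exact Finset.sum_congr rfl fun k _ => by simp [mul_comm]

theorem integral_eq_zero (hZ : IsCSG Z r) (k : ℤ) : ∫ ω, Z k ω = 0 := by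
  obtain ⟨v, hv⟩ := hZ.2.1 {k} fun _ => 1
  simp only [Finset.sum_singleton, one_mul] at hv
  rw [← integral_id_gaussianReal (μ := 0) (v := v), ← hv,
    integral_map (hZ.1 k).aemeasurable (by fun_prop)]

theorem isCenteredGaussian_div_sqrt (hZ : IsCSG Z r) :
    IsCenteredGaussian (fun k ω => Z k ω / √(r 0)) (fun j k => r (k - j) / r 0)
      (ℙ : Measure Ω) where
  measurable k := (hZ.1 k).div_const _
  isGaussianProcess := by
    simpa [div_eq_inv_mul] using hZ.isGaussianProcess.smul fun _ => (√(r 0))⁻¹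
  integral_eq_zero k := by rw [integral_div, hZ.integral_eq_zero, zero_div]
  integral_mul j k := by
    simp only [div_mul_div_comm, Real.mul_self_sqrt hZ.2.2.2.le, integral_div, hZ.2.2.1]

theorem div_zero_self (hZ : IsCSG Z r) : r 0 / r 0 = 1 := div_self hZ.2.2.2.ne'

theorem lamE_fpoly (hZ : IsCSG Z r) (d : ℕ → ℝ) (q : ℕ) : lamE (fpoly (r 0) d q) Z = d 0 := by
  have hY := hZ.isCenteredGaussian_div_sqrt
  have := hY.isProbabilityMeasure
  simp only [lamE, fpoly_eq_add_eval_divergence]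
  rw [integral_add (integrable_const _) ((hY.hasMoments 0).polynomial_eval _).integrable,
    hY.integral_divergence_hermiteAntidivergence (by simpa using hZ.div_zero_self)]
  simp

theorem Ustat_fpoly (hZ : IsCSG Z r) (d : ℕ → ℝ) (q n : ℕ) :
    Ustat (fpoly (r 0) d q) Z n = fun ω => (√n)⁻¹ * ∑ i ∈ Finset.range n,
      (divergence (hermiteAntidivergence d q)).eval (Z i ω / √(r 0)) := by
  ext ω
  rcases n.eq_zero_or_pos with rfl | hn
  · simp [Ustat]
  simp only [Ustat, Qvar, hZ.lamE_fpoly, fpoly_eq_add_eval_divergence, Finset.sum_add_distrib,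
    Finset.sum_const, Finset.card_range, nsmul_eq_mul]
  field_simp
  rw [Real.sq_sqrt (Nat.cast_nonneg n)]
  ring

theorem abs_div_zero_le_one (hZ : IsCSG Z r) (m : ℤ) : |r m / r 0| ≤ 1 := by
  simpa using hZ.isCenteredGaussian_div_sqrt.abs_cov_le_one
    (fun _ => by simpa using hZ.div_zero_self) 0 m

theorem hasSum_ufq (hZ : IsCSG Z r) (hsum : Summable fun j => r j ^ 2) (d : ℕ → ℝ) (q : ℕ) :
    HasSum (fun m => ∑ k ∈ Finset.Icc 1 (q / 2),
      d (2 * k) ^ 2 * (Nat.factorial (2 * k)) * (r m / r 0) ^ (2 * k)) (ufq r d q) := by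
  refine hasSum_sum fun k hk => HasSum.mul_left _ (Summable.hasSum ?_)
  refine summable_pow_of_abs_le_one ?_ hZ.abs_div_zero_le_one (by grind)
  simpa only [div_pow] using hsum.div_const (r 0 ^ 2)

theorem coeff_eq_zero_of_ufq_nonpos (hZ : IsCSG Z r) (hsum : Summable fun j => r j ^ 2)
    {d : ℕ → ℝ} {q : ℕ} (hu : ufq r d q ≤ 0) {k : ℕ} (hk : k ∈ Finset.Icc 1 (q / 2)) :
    d (2 * k) = 0 := by
  have summand_nonneg (m : ℤ) : ∀ l ∈ Finset.Icc 1 (q / 2),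
      0 ≤ d (2 * l) ^ 2 * (Nat.factorial (2 * l)) * (r m / r 0) ^ (2 * l) := fun l _ =>
    mul_nonneg (by positivity) ((even_two_mul l).pow_nonneg _)
  have sq_le : d (2 * k) ^ 2 * (Nat.factorial (2 * k)) ≤ ufq r d q := calc
    _ = d (2 * k) ^ 2 * (Nat.factorial (2 * k)) * (r 0 / r 0) ^ (2 * k) := by
      rw [hZ.div_zero_self, one_pow, mul_one]
    _ ≤ ∑ l ∈ Finset.Icc 1 (q / 2), d (2 * l) ^ 2 * (Nat.factorial (2 * l)) *
        (r 0 / r 0) ^ (2 * l) := Finset.single_le_sum (summand_nonneg 0) hk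
    _ ≤ ufq r d q := le_hasSum (hZ.hasSum_ufq hsum d q) 0 fun m _ =>
      Finset.sum_nonneg (summand_nonneg m)
  have sq_nonpos := nonpos_of_mul_nonpos_left (sq_le.trans hu)
    (Nat.cast_pos.2 (Nat.factorial_pos (2 * k)))
  exact pow_eq_zero_iff two_ne_zero |>.1 (sq_nonpos.antisymm (sq_nonneg _))

theorem map_Ustat_of_ufq_nonpos (hZ : IsCSG Z r) (hsum : Summable fun j => r j ^ 2)
    {d : ℕ → ℝ} {q : ℕ} (hu : ufq r d q ≤ 0) (n : ℕ) :
    Measure.map (Ustat (fpoly (r 0) d q) Z n) (ℙ : Measure Ω) = Measure.dirac 0 := by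
  have := hZ.isGaussianProcess.isProbabilityMeasure
  have antidivergence_eq : hermiteAntidivergence d q = 0 := Finset.sum_eq_zero fun k hk => by
    rw [hZ.coeff_eq_zero_of_ufq_nonpos hsum hu hk, zero_smul]
  simp [hZ.Ustat_fpoly, antidivergence_eq]

end IsCSG

theorem statement_6_general {Ω : Type*} [MeasureSpace Ω] (Z : ℤ → Ω → ℝ) (r : ℤ → ℝ)
    (hZ : IsCSG Z r) (q : ℕ) (d : ℕ → ℝ) (hsum : Summable fun j : ℤ => r j ^ 2) :
    Tendsto
      (fun n : ℕ =>
        dTV (Measure.map (Ustat (fpoly (r 0) d q) Z n) (ℙ : Measure Ω))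
          (gaussianReal 0 (Real.toNNReal (ufq r d q))))
      atTop (nhds 0) := by
  rcases le_or_gt (ufq r d q) 0 with hu | hu
  · simp [hZ.map_Ustat_of_ufq_nonpos hsum hu, Real.toNNReal_of_nonpos hu, dTV_self]
  have hY := hZ.isCenteredGaussian_div_sqrt.comp ((↑) : ℕ → ℤ)
  have hκ := hZ.hasSum_ufq hsum d q
  have hρ : Summable fun m => (r m / r 0) ^ 2 := by
    simpa only [div_pow] using hsum.div_const (r 0 ^ 2)
  have hunit (i : ℕ) : r ((i : ℤ) - i) / r 0 = 1 := by simpa using hZ.div_zero_self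
  simp only [hZ.Ustat_fpoly, ← hκ.tsum_eq]
  exact hY.tendsto_dTV_gaussianReal (ρ := fun m => r m / r 0) hZ.div_zero_self hρ
    (fun a => odd_of_mem_support_hermiteAntidivergence) hκ.summable
    (fun i j => hY.integral_divergence_hermiteAntidivergence_mul (hunit i) (hunit j) d q)
    (hκ.tsum_eq ▸ hu)

/-- asymptotic normality in total variation under square
summability and asymptotic constant sign/monotonicity of `r`. -/
theorem statement_6
    {Ω : Type*} [MeasureSpace Ω] [IsProbabilityMeasure (ℙ : Measure Ω)]
    (Z : ℤ → Ω → ℝ) (r : ℤ → ℝ) (hZ : IsCSG Z r)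
    (q : ℕ) (hq : 0 < q) (hqe : q % 2 = 0)
    (d : ℕ → ℝ) (hd : d q = r 0 ^ (q / 2))
    (hsum : Summable fun j : ℤ => (r j) ^ 2)
    (hmono : ∃ K : ℕ,
      (∀ k : ℕ, K ≤ k → 0 ≤ r k ∧ r (k + 1) ≤ r k) ∨
      (∀ k : ℕ, K ≤ k → r k ≤ 0 ∧ r k ≤ r (k + 1))) :
    Filter.Tendsto
      (fun n : ℕ =>
        dTV (Measure.map (Ustat (fpoly (r 0) d q) Z n) (ℙ : Measure Ω))
          (gaussianReal 0 (Real.toNNReal (ufq r d q))))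
      Filter.atTop (nhds 0) :=
  statement_6_general Z r hZ q d hsum

end
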